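/- arXiv:1904.00146 — 4 statements merged into one kernel-verified Lean document; each statement's English description precedes it below -/
import Mathlib

section
/- Fix integers ℓ > r ≥ 2. For every ε₁ > 0 there exist η₁ = η₁(r, ℓ, ε₁) > 0 and n₀ = n₀(r, ℓ, ε₁) such that any H_{K_ℓ}^(r)-free r-graph G of order n ≥ n₀ with at least t_r(n, ℓ−1) − η₁·n^r edges is ε₁-close to T_r(n, ℓ−1). -/
open Finset

/-- An `r`-graph: a set of edges each of which has exactly `r` vertices. -/
def IsRGraph {α : Type*} (r : ℕ) (G : Finset (Finset α)) : Prop :=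
  ∀ e ∈ G, e.card = r

/-- `G` contains a (not necessarily induced) copy of `H`, i.e. a subgraph isomorphic to `H`. -/
def ContainsCopy {α β : Type*} [DecidableEq β]
    (H : Finset (Finset α)) (G : Finset (Finset β)) : Prop :=
  ∃ f : α → β, Function.Injective f ∧ ∀ e ∈ H, e.image f ∈ G

/-- There is a homomorphism from `H` to `G`. -/
def ContainsHom {α β : Type*} [DecidableEq β]
    (H : Finset (Finset α)) (G : Finset (Finset β)) : Prop :=
  ∃ f : α → β, ∀ e ∈ H, e.image f ∈ G

/-- The Turán number `ex(n, H)` for `r`-graphs: the maximum number of edges in an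
`n`-vertex `H`-free `r`-graph. -/
noncomputable def exNum {α : Type*} (r n : ℕ) (H : Finset (Finset α)) : ℕ :=
  sSup {m | ∃ G : Finset (Finset (Fin n)), IsRGraph r G ∧ ¬ ContainsCopy H G ∧ G.card = m}

/-- The two endpoints of an edge of a simple graph, as a `Finset`. -/
def sym2ToFinset {α : Type*} [Fintype α] [DecidableEq α] (e : Sym2 α) : Finset α :=
  Finset.univ.filter (· ∈ e)

/-- The expansion `H_F^(r)` of a 2-graph `F`: each edge of `F` is enlarged with a new set of
`r - 2` vertices, distinct edges getting disjoint sets of new vertices. -/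
def expansion {α : Type*} [Fintype α] [DecidableEq α] (r : ℕ)
    (F : SimpleGraph α) [DecidableRel F.Adj] :
    Finset (Finset (α ⊕ (F.edgeFinset × Fin (r - 2)))) :=
  F.edgeFinset.attach.image (fun e =>
    (sym2ToFinset e.1).image Sum.inl ∪
      (Finset.univ : Finset (Fin (r - 2))).image (fun i => Sum.inr (e, i)))

/-- The complete balanced `l`-partite `r`-graph `T_r(n, l)` on vertex set `Fin n`,
with vertex classes the residue classes modulo `l` (which differ in size by at most 1):
its edges are all `r`-sets meeting each class in at most one vertex. -/
def turanGraph (r n l : ℕ) : Finset (Finset (Fin n)) :=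
  (Finset.univ.powersetCard r).filter
    (fun e => ∀ u ∈ e, ∀ v ∈ e, (u : ℕ) % l = (v : ℕ) % l → u = v)

/-- `t_r(n, l)`, the number of edges of `T_r(n, l)`. -/
def turanNum (r n l : ℕ) : ℕ := (turanGraph r n l).card

/-- Two `r`-graphs on `Fin n` are `ε`-close if some relabelling of the first one has
symmetric difference at most `ε·C(n,r)` with the second one. -/
def EpsClose (r n : ℕ) (ε : ℝ) (G₁ G₂ : Finset (Finset (Fin n))) : Prop :=
  ∃ σ : Fin n ≃ Fin n,
    ((((G₁.image fun e => e.image σ) \ G₂) ∪ (G₂ \ (G₁.image fun e => e.image σ))).card : ℝ)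
      ≤ ε * (n.choose r)

/-- `G` contains a member of the decomposition family `𝓕_F` (w.r.t. proper `ℓ`-colourings of
`F`) as a subgraph, with all its vertices placed inside `S`.  A member of `𝓕_F` is obtained
from `F` by deleting the vertices of `ℓ - 2` colour classes of a proper `ℓ`-colouring of `F`. -/
def ContainsDecompMemberOn {α β : Type*} [DecidableEq β] (ℓ : ℕ) (F : SimpleGraph α)
    (G : Finset (Finset β)) (S : Set β) : Prop :=
  ∃ c : α → Fin ℓ, (∀ ⦃u v⦄, F.Adj u v → c u ≠ c v) ∧
    ∃ i j : Fin ℓ, i ≠ j ∧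
      ∃ f : {v : α // c v = i ∨ c v = j} → β, Function.Injective f ∧
        (∀ v, f v ∈ S) ∧
        ∀ u v : {v : α // c v = i ∨ c v = j}, F.Adj u.1 v.1 → ({f u, f v} : Finset β) ∈ G

/-- `biex(n, F) = ex(n, 𝓕_F)`: the maximum number of edges in an `n`-vertex 2-graph containing
no member of the decomposition family of `F` (w.r.t. proper `ℓ`-colourings) as a subgraph. -/
noncomputable def biex {α : Type*} (ℓ : ℕ) (F : SimpleGraph α) (n : ℕ) : ℕ :=
  sSup {m | ∃ G : Finset (Finset (Fin n)), IsRGraph 2 G ∧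
    ¬ ContainsDecompMemberOn ℓ F G Set.univ ∧ G.card = m}

/-- The Lagrangian of an `r`-graph `G`:
`λ(G) = max { Σ_{e ∈ G} Π_{i ∈ e} w i }` over all legal weightings `w`. -/
noncomputable def lagrangian {α : Type*} [Fintype α] (G : Finset (Finset α)) : ℝ :=
  sSup {x : ℝ | ∃ w : α → ℝ, (∀ i, 0 ≤ w i) ∧ (∑ i, w i) = 1 ∧
    x = ∑ e ∈ G, ∏ i ∈ e, w i}

/-!
Call a pair of vertices robust if no bounded set of further vertices meets all edges containing
it. A clique on `k + 1 = ℓ` vertices of robust pairs would extend greedily to the expansion of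
`K_ℓ`, so the graph `P` of robust pairs is `K_{k+1}`-free. All but `O(n ^ (r - 1))` edges of `G` are
`r`-cliques of `P`: any other edge contains a non-robust pair together with one of the boundedly
many vertices blocking it.

Hence `P` has nearly as many `r`-cliques as a `K_{k+1}`-free graph can have, and by the
Moon–Moser inequalities nearly as many edges. Füredi's proof of Turán's theorem then yields
a `k`-colouring of the vertices with few monochromatic edges of `P` and nearly equal classes, so
some permutation carries most vertices to the class of the Turán graph prescribed by their colour.
An edge of `G` falls outside the relabelled Turán graph only if it is not a clique of `P`, contains
a misplaced vertex, or contains a monochromatic edge of `P`, and each of these is rare. Since `G`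
has almost as many edges as the Turán graph, few edges of the latter are missing from `G` either.
-/

section CliqueCount

variable {V : Type*} [Fintype V] [DecidableEq V] (P : SimpleGraph V) [DecidableRel P.Adj]

/-- The common neighbourhood of `A`; for a clique `A`, these are the vertices extending `A` to a
larger clique. -/
def commonNeighborFinset (A : Finset V) : Finset V := {v | ∀ a ∈ A, P.Adj a v}

variable {P}

lemma mem_commonNeighborFinset {A : Finset V} {v : V} :
    v ∈ commonNeighborFinset P A ↔ ∀ a ∈ A, P.Adj a v := by
  simp [commonNeighborFinset]

lemma notMem_of_mem_commonNeighborFinset {A : Finset V} {v : V}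
    (hv : v ∈ commonNeighborFinset P A) : v ∉ A := fun hvA ↦
  P.loopless.irrefl v (mem_commonNeighborFinset.1 hv v hvA)

lemma erase_mem_cliqueFinset {s : ℕ} {A : Finset V} {a : V} (hA : A ∈ P.cliqueFinset (s + 1))
    (ha : a ∈ A) : A.erase a ∈ P.cliqueFinset s :=
  SimpleGraph.mem_cliqueFinset_iff.2 ((SimpleGraph.mem_cliqueFinset_iff.1 hA).erase_of_mem ha)

lemma mem_commonNeighborFinset_erase {s : ℕ} {A : Finset V} {a : V}
    (hA : A ∈ P.cliqueFinset s) (ha : a ∈ A) : a ∈ commonNeighborFinset P (A.erase a) :=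
  mem_commonNeighborFinset.2 fun _ hb ↦ (SimpleGraph.mem_cliqueFinset_iff.1 hA).isClique
    (mem_of_mem_erase hb) ha (ne_of_mem_erase hb)

lemma insert_mem_cliqueFinset {s : ℕ} {B : Finset V} {v : V} (hB : B ∈ P.cliqueFinset s)
    (hv : v ∈ commonNeighborFinset P B) : insert v B ∈ P.cliqueFinset (s + 1) :=
  SimpleGraph.mem_cliqueFinset_iff.2 <| (SimpleGraph.mem_cliqueFinset_iff.1 hB).insert
    fun b hb ↦ (mem_commonNeighborFinset.1 hv b hb).symm

variable (P)

lemma sum_cliqueFinset_sum_erase {M : Type*} [AddCommMonoid M] (s : ℕ) (g : Finset V → M) :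
    ∑ A ∈ P.cliqueFinset (s + 1), ∑ a ∈ A, g (A.erase a)
      = ∑ B ∈ P.cliqueFinset s, #(commonNeighborFinset P B) • g B := by
  simp_rw [← sum_const]
  rw [sum_sigma', sum_sigma']
  refine sum_bij' (fun x _ ↦ ⟨x.1.erase x.2, x.2⟩) (fun x _ ↦ ⟨insert x.2 x.1, x.2⟩) ?_ ?_ ?_ ?_ ?_
  · rintro ⟨A, a⟩ h
    obtain ⟨hA, ha⟩ := mem_sigma.1 h
    exact mem_sigma.2 ⟨erase_mem_cliqueFinset hA ha, mem_commonNeighborFinset_erase hA ha⟩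
  · rintro ⟨B, v⟩ h
    obtain ⟨hB, hv⟩ := mem_sigma.1 h
    exact mem_sigma.2 ⟨insert_mem_cliqueFinset hB hv, mem_insert_self v B⟩
  · rintro ⟨A, a⟩ h
    simp [insert_erase (mem_sigma.1 h).2]
  · rintro ⟨B, v⟩ h
    simp [erase_insert (notMem_of_mem_commonNeighborFinset (mem_sigma.1 h).2)]
  · exact fun _ _ ↦ rfl

lemma succ_mul_card_cliqueFinset_succ (s : ℕ) :
    (s + 1) * #(P.cliqueFinset (s + 1)) = ∑ B ∈ P.cliqueFinset s, #(commonNeighborFinset P B) := by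
  have double_count := sum_cliqueFinset_sum_erase P s (fun _ ↦ 1)
  simp only [smul_eq_mul, mul_one, sum_const] at double_count
  rw [← double_count, sum_congr rfl fun A hA ↦ (SimpleGraph.mem_cliqueFinset_iff.1 hA).card_eq,
    sum_const, smul_eq_mul, mul_comm]

/-- A vertex outside the common neighbourhood of `A` lies in at most one of those of the sets
`A.erase a`. -/
lemma sum_card_commonNeighborFinset_erase_le (A : Finset V) :
    ∑ a ∈ A, #(commonNeighborFinset P (A.erase a))
      ≤ Fintype.card V + (#A - 1) * #(commonNeighborFinset P A) := by
  have card_filter_le (v : V) : #{a ∈ A | v ∈ commonNeighborFinset P (A.erase a)}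
      ≤ 1 + (#A - 1) * if v ∈ commonNeighborFinset P A then 1 else 0 := by
    split_ifs with hv
    · exact (card_filter_le _ _).trans (by omega)
    · obtain ⟨b, hb, hbv⟩ : ∃ b ∈ A, ¬ P.Adj b v := by simpa [commonNeighborFinset] using hv
      have only_b (a : V) (ha : v ∈ commonNeighborFinset P (A.erase a)) : a = b := by
        by_contra hab
        exact hbv (mem_commonNeighborFinset.1 ha b (mem_erase.2 ⟨Ne.symm hab, hb⟩))
      rw [mul_zero, add_zero, card_le_one]
      exact fun a ha a' ha' ↦
        (only_b a (mem_filter.1 ha).2).trans (only_b a' (mem_filter.1 ha').2).symm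
  calc ∑ a ∈ A, #(commonNeighborFinset P (A.erase a))
      = ∑ v, #{a ∈ A | v ∈ commonNeighborFinset P (A.erase a)} := by
        simpa [bipartiteAbove, bipartiteBelow] using
          sum_card_bipartiteAbove_eq_sum_card_bipartiteBelow (s := A) (t := univ)
            (fun a v ↦ v ∈ commonNeighborFinset P (A.erase a))
    _ ≤ ∑ v, (1 + (#A - 1) * if v ∈ commonNeighborFinset P A then 1 else 0) :=
        sum_le_sum fun v _ ↦ card_filter_le v
    _ = Fintype.card V + (#A - 1) * #(commonNeighborFinset P A) := by
        simp only [sum_add_distrib, sum_const, card_univ, smul_eq_mul, mul_one, ← mul_sum,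
          sum_boole, filter_univ_mem, Nat.cast_id]

/-- Cauchy–Schwarz on the degrees of the `s`-cliques, as in the Moon–Moser inequality. -/
lemma sq_card_cliqueFinset_succ_le (s : ℕ) :
    ((s + 1) * #(P.cliqueFinset (s + 1))) ^ 2 ≤ #(P.cliqueFinset s) *
      (Fintype.card V * #(P.cliqueFinset (s + 1)) + s * ((s + 2) * #(P.cliqueFinset (s + 2)))) := by
  rw [succ_mul_card_cliqueFinset_succ, succ_mul_card_cliqueFinset_succ]
  refine sq_sum_le_card_mul_sum_sq.trans (Nat.mul_le_mul_left _ ?_)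
  calc ∑ B ∈ P.cliqueFinset s, #(commonNeighborFinset P B) ^ 2
      = ∑ A ∈ P.cliqueFinset (s + 1), ∑ a ∈ A, #(commonNeighborFinset P (A.erase a)) := by
        rw [sum_cliqueFinset_sum_erase P s (fun B ↦ #(commonNeighborFinset P B))]
        simp_rw [smul_eq_mul, sq]
    _ ≤ ∑ A ∈ P.cliqueFinset (s + 1), (Fintype.card V + s * #(commonNeighborFinset P A)) := by
        refine sum_le_sum fun A hA ↦ ?_
        simpa [(SimpleGraph.mem_cliqueFinset_iff.1 hA).card_eq]
          using sum_card_commonNeighborFinset_erase_le P A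
    _ = _ := by rw [sum_add_distrib, ← mul_sum, sum_const, smul_eq_mul, mul_comm]

variable {P}

/-- The Moon–Moser inequality; complete `k`-partite graphs with equal classes attain equality. -/
lemma succ_mul_card_cliqueFinset_succ_le {k s j : ℕ} (hP : P.CliqueFree (k + 1))
    (hsj : s + j = k) :
    (s + 1) * k * #(P.cliqueFinset (s + 1)) ≤ j * Fintype.card V * #(P.cliqueFinset s) := by
  induction j generalizing s with
  | zero =>
    obtain rfl : s = k := hsj
    simp [hP.cliqueFinset]
  | succ j ih =>
    have next_ratio := ih (s := s + 1) (by omega)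
    have cauchy_schwarz := sq_card_cliqueFinset_succ_le P s
    set a := #(P.cliqueFinset s)
    set b := #(P.cliqueFinset (s + 1))
    set c := #(P.cliqueFinset (s + 2))
    set n := Fintype.card V
    rcases b.eq_zero_or_pos with hb | hb
    · simp [hb]
    refine Nat.le_of_mul_le_mul_left ?_ (show 0 < (s + 1) * b by positivity)
    calc (s + 1) * b * ((s + 1) * k * b) = k * ((s + 1) * b) ^ 2 := by ring
      _ ≤ k * (a * (n * b + s * ((s + 2) * c))) := by gcongr
      _ = a * (k * n * b + s * ((s + 1 + 1) * k * c)) := by ring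
      _ ≤ a * (k * n * b + s * (j * n * b)) := by gcongr
      _ = (s + 1) * b * ((j + 1) * n * a) := by rw [← hsj]; ring

/-- A complete `k`-partite graph on `n` vertices with equal classes has `C(k, i) (n / k) ^ i`
cliques of size `i`; this is the normalisation on both sides. -/
lemma card_cliqueFinset_mul_le {k t s : ℕ} (hP : P.CliqueFree (k + 1)) (hts : t ≤ s) (hsk : s ≤ k) :
    #(P.cliqueFinset s) * k ^ s * (k.choose t * Fintype.card V ^ t)
      ≤ #(P.cliqueFinset t) * k ^ t * (k.choose s * Fintype.card V ^ s) := by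
  induction s, hts using Nat.le_induction with
  | base => exact le_rfl
  | succ s _ ih =>
    have chain := ih (by omega)
    have ratio := succ_mul_card_cliqueFinset_succ_le hP (show s + (k - s) = k by omega)
    have choose_succ := Nat.choose_succ_right_eq k s
    set n := Fintype.card V
    refine Nat.le_of_mul_le_mul_left ?_ s.succ_pos
    calc (s + 1) * (#(P.cliqueFinset (s + 1)) * k ^ (s + 1) * (k.choose t * n ^ t))
        = (s + 1) * k * #(P.cliqueFinset (s + 1)) * (k ^ s * (k.choose t * n ^ t)) := by ring
      _ ≤ (k - s) * n * #(P.cliqueFinset s) * (k ^ s * (k.choose t * n ^ t)) := by gcongr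
      _ = (k - s) * n * (#(P.cliqueFinset s) * k ^ s * (k.choose t * n ^ t)) := by ring
      _ ≤ (k - s) * n * (#(P.cliqueFinset t) * k ^ t * (k.choose s * n ^ s)) := by gcongr
      _ = #(P.cliqueFinset t) * k ^ t * (k.choose s * (k - s) * n ^ (s + 1)) := by ring
      _ = (s + 1) * (#(P.cliqueFinset t) * k ^ t * (k.choose (s + 1) * n ^ (s + 1))) := by
        rw [← choose_succ]; ring

variable (P) in
lemma card_cliqueFinset_two : #(P.cliqueFinset 2) = #P.edgeFinset := by
  have cliqueFinset_one : P.cliqueFinset 1 = univ.image singleton := by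
    ext A
    simp [SimpleGraph.isNClique_one, eq_comm]
  refine Nat.eq_of_mul_eq_mul_left two_pos ?_
  rw [← P.sum_degrees_eq_twice_card_edges, ← one_add_one_eq_two,
    succ_mul_card_cliqueFinset_succ P 1, cliqueFinset_one, sum_image singleton_injective.injOn]
  simp [commonNeighborFinset, ← SimpleGraph.neighborFinset_eq_filter]

end CliqueCount

section FurediColoring

lemma sum_card_fiber_sub_sq {V : Type*} [Fintype V] {k : ℕ} (hk : 0 < k) {c : V → ℕ}
    (hc : ∀ v, c v < k) :
    ∑ i ∈ range k, ((#{v | c v = i} : ℝ) - Fintype.card V / k) ^ 2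
      = ∑ i ∈ range k, (#{v | c v = i} : ℝ) ^ 2 - (Fintype.card V : ℝ) ^ 2 / k := by
  have sum_card : ∑ i ∈ range k, (#{v | c v = i} : ℝ) = Fintype.card V := by
    exact_mod_cast (card_eq_sum_card_fiberwise (s := (univ : Finset V)) (t := range k)
      fun v _ ↦ mem_coe.2 (mem_range.2 (hc v))).symm
  have hk' : (k : ℝ) ≠ 0 := by positivity
  simp_rw [sub_sq, sum_add_distrib, sum_sub_distrib, ← sum_mul, ← mul_sum, sum_card]
  simp only [sum_const, card_range, nsmul_eq_mul]
  field_simp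
  ring

variable {V : Type*} (P : SimpleGraph V) [DecidableRel P.Adj]

lemma card_interedges_eq_sum (S T : Finset V) :
    #(P.interedges S T) = ∑ x ∈ S, #{y ∈ T | P.Adj x y} := by
  simp_rw [SimpleGraph.interedges_def, card_filter, sum_product]

variable [DecidableEq V]

lemma card_interedges_union_right (S : Finset V) {T T' : Finset V} (h : Disjoint T T') :
    #(P.interedges S (T ∪ T')) = #(P.interedges S T) + #(P.interedges S T') := by
  simp_rw [card_interedges_eq_sum, filter_union, ← sum_add_distrib]
  exact sum_congr rfl fun _ _ ↦ card_union_of_disjoint (disjoint_filter_filter h)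

lemma card_interedges_union_self {S T : Finset V} (h : Disjoint S T) :
    #(P.interedges (S ∪ T) (S ∪ T))
      = #(P.interedges S S) + 2 * #(P.interedges T S) + #(P.interedges T T) := by
  have comm (A B : Finset V) : #(P.interedges A B) = #(P.interedges B A) :=
    have : Std.Symm P.Adj := P.symm
    Rel.card_interedges_comm A B
  rw [card_interedges_union_right P _ h, comm _ S, comm _ T, card_interedges_union_right P S h,
    card_interedges_union_right P T h, comm S T]
  ring

variable {P}

/-- Peel off the non-neighbours `W` in `S` of a vertex of maximum degree in `S`. -/
lemma exists_subset_cliqueFreeOn_sdiff {k : ℕ} {S : Finset V}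
    (hS : P.CliqueFreeOn (S : Set V) (k + 2)) :
    ∃ W ⊆ S, P.CliqueFreeOn (↑(S \ W) : Set V) (k + 1) ∧
      #(P.interedges S S) + (#(P.interedges W W) + #W ^ 2) + #(S \ W) ^ 2
        ≤ #(P.interedges (S \ W) (S \ W)) + #S ^ 2 := by
  rcases S.eq_empty_or_nonempty with rfl | hne
  · exact ⟨∅, subset_rfl, by simp, by simp⟩
  obtain ⟨x, hx, hmax⟩ := S.exists_max_image (fun x ↦ #{y ∈ S | P.Adj x y}) hne
  set N := {y ∈ S | P.Adj x y}
  set W := {y ∈ S | ¬ P.Adj x y}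
  have sdiff_eq : S \ W = N := by ext y; grind
  have disjoint : Disjoint N W := disjoint_filter_filter_not _ _ _
  have union_eq : N ∪ W = S := filter_union_filter_not_eq _ _
  have degree_sum_le : #(P.interedges W N) + #(P.interedges W W) ≤ #W * #N := by
    rw [← card_interedges_union_right P W disjoint, union_eq, card_interedges_eq_sum,
      ← smul_eq_mul]
    exact sum_le_card_nsmul _ _ _ fun w hw ↦ hmax w (mem_filter.1 hw).1
  refine ⟨W, filter_subset _ _, fun t ht clique ↦ ?_, ?_⟩
  · rw [sdiff_eq, coe_subset] at ht
    refine hS (t := insert x t) ?_ (clique.insert fun b hb ↦ (mem_filter.1 (ht hb)).2)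
    exact coe_subset.2 (insert_subset hx (ht.trans (filter_subset _ _)))
  · have edges := card_interedges_union_self P disjoint
    rw [union_eq] at edges
    rw [sdiff_eq, edges, ← union_eq, card_union_of_disjoint disjoint]
    nlinarith

omit [DecidableEq V] in
/-- Füredi's partition; `P.interedges A A` has two elements for each edge inside `A`. -/
lemma exists_coloring_card_interedges_le {k : ℕ} {S : Finset V}
    (hS : P.CliqueFreeOn (S : Set V) (k + 1)) :
    ∃ c : V → ℕ, (∀ x ∈ S, c x < k) ∧
      #(P.interedges S S) + ∑ i ∈ range k,
        (#(P.interedges {x ∈ S | c x = i} {x ∈ S | c x = i}) + #{x ∈ S | c x = i} ^ 2)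
        ≤ #S ^ 2 := by
  classical
  induction k generalizing S with
  | zero =>
    obtain rfl : S = ∅ := eq_empty_of_forall_notMem fun x hx ↦
      hS (t := {x}) (by simpa using hx) (SimpleGraph.isNClique_one.2 ⟨x, rfl⟩)
    exact ⟨fun _ ↦ 0, by simp, by simp⟩
  | succ k ih =>
    obtain ⟨W, hWS, hfree, hpeel⟩ := exists_subset_cliqueFreeOn_sdiff hS
    obtain ⟨c, hc, hsum⟩ := ih hfree
    set c' : V → ℕ := fun x ↦ if x ∈ W then k else c x
    have last_class : {x ∈ S | c' x = k} = W := by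
      ext x
      have := hc x
      have := @hWS x
      grind
    have old_class {i : ℕ} (hi : i ∈ range k) :
        {x ∈ S | c' x = i} = {x ∈ S \ W | c x = i} := by
      ext x
      grind
    refine ⟨c', fun x hx ↦ ?_, ?_⟩
    · have := hc x
      grind
    · rw [sum_range_succ, last_class, sum_congr rfl fun i hi ↦ by rw [old_class hi]]
      omega

omit [DecidableEq V] in
lemma card_monochromatic_eq_sum_card_interedges [Fintype V] {k : ℕ} {c : V → ℕ}
    (hc : ∀ v, c v < k) :
    #{p : V × V | P.Adj p.1 p.2 ∧ c p.1 = c p.2}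
      = ∑ i ∈ range k, #(P.interedges {v | c v = i} {v | c v = i}) := by
  rw [card_eq_sum_card_fiberwise fun p _ ↦ mem_range.2 (hc p.1)]
  refine sum_congr rfl fun i _ ↦ congrArg card ?_
  ext p
  rw [SimpleGraph.mem_interedges_iff]
  grind

omit [DecidableEq V] in
lemma exists_balanced_coloring [Fintype V] {k : ℕ} (hk : 0 < k) (hP : P.CliqueFree (k + 1))
    {τ : ℝ} (hτ : 0 ≤ τ)
    (hE : (1 - 1 / k - τ ^ 2) * (Fintype.card V : ℝ) ^ 2 ≤ 2 * #P.edgeFinset) :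
    ∃ c : V → ℕ, (∀ v, c v < k) ∧
      (#{p : V × V | P.Adj p.1 p.2 ∧ c p.1 = c p.2} : ℝ) ≤ τ ^ 2 * (Fintype.card V : ℝ) ^ 2 ∧
      ∀ i < k, (#{v | c v = i} : ℝ) ≤ Fintype.card V / k + τ * Fintype.card V := by
  classical
  obtain ⟨c, hc, hfuredi⟩ := exists_coloring_card_interedges_le (S := univ) (by simpa using hP)
  replace hc (v : V) : c v < k := hc v (mem_univ v)
  have interedges_univ : #(P.interedges univ univ) = 2 * #P.edgeFinset := by
    rw [P.two_mul_card_edgeFinset, SimpleGraph.interedges_def, univ_product_univ]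
  rw [interedges_univ, card_univ, sum_add_distrib,
    ← card_monochromatic_eq_sum_card_interedges hc] at hfuredi
  replace hfuredi := (Nat.cast_le (α := ℝ)).2 hfuredi
  push_cast at hfuredi
  set n := (Fintype.card V : ℝ)
  have defect : (#{p : V × V | P.Adj p.1 p.2 ∧ c p.1 = c p.2} : ℝ)
      + ∑ i ∈ range k, ((#{v | c v = i} : ℝ) - n / k) ^ 2 ≤ τ ^ 2 * n ^ 2 := by
    rw [sum_card_fiber_sub_sq hk hc]
    have expand : (1 - 1 / k - τ ^ 2) * n ^ 2 = n ^ 2 - n ^ 2 / k - τ ^ 2 * n ^ 2 := by ring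
    linarith
  have variance_nonneg : 0 ≤ ∑ i ∈ range k, ((#{v | c v = i} : ℝ) - n / k) ^ 2 :=
    sum_nonneg fun i _ ↦ sq_nonneg _
  refine ⟨c, hc, by linarith, fun i hi ↦ ?_⟩
  have deviation_sq : ((#{v | c v = i} : ℝ) - n / k) ^ 2 ≤ (τ * n) ^ 2 := by
    have single_le := single_le_sum (f := fun i ↦ ((#{v | c v = i} : ℝ) - n / k) ^ 2)
      (fun i _ ↦ sq_nonneg _) (mem_range.2 hi)
    rw [mul_pow]
    linarith [Nat.cast_nonneg (α := ℝ) #{p : V × V | P.Adj p.1 p.2 ∧ c p.1 = c p.2}]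
  linarith [(abs_le.1 (abs_le_of_sq_le_sq deviation_sq (by positivity))).2]

end FurediColoring

section Alignment

variable {V ι : Type*} [Fintype V] [DecidableEq V] [DecidableEq ι]

lemma card_filter_swap_ne_lt {c d : V → ι} {v w : V} (hv : d v ≠ c v) (hw : d w = c v)
    (hcw : c w ≠ c v) : #{u | d (Equiv.swap v w u) ≠ c u} < #{u | d u ≠ c u} := by
  refine card_lt_card ((ssubset_iff_of_subset fun u hu ↦ ?_).2
    ⟨v, by simpa using hv, by simp [hw]⟩)
  by_cases huv : u = v
  · simpa [huv] using hv
  by_cases huw : u = w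
  · simpa [huw, hw] using hcw.symm
  simpa [Equiv.swap_apply_of_ne_of_ne huv huw] using hu

omit [DecidableEq V] in
/-- A permutation with the fewest disagreements works, since otherwise a transposition would
improve it. -/
lemma exists_perm_card_ne_le (c d : V → ι) {s : Finset ι} (hc : ∀ v, c v ∈ s) :
    ∃ σ : Equiv.Perm V, #{v | d (σ v) ≠ c v} ≤ ∑ i ∈ s, (#{v | c v = i} - #{v | d v = i}) := by
  classical
  obtain ⟨σ, -, hmin⟩ := (univ : Finset (Equiv.Perm V)).exists_min_image
    (fun σ ↦ #{v | d (σ v) ≠ c v}) univ_nonempty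
  refine ⟨σ, ?_⟩
  rw [card_eq_sum_card_fiberwise fun v _ ↦ hc v]
  refine sum_le_sum fun i _ ↦ ?_
  rw [filter_filter]
  by_cases hmisplaced : ∃ v, d (σ v) ≠ c v ∧ c v = i
  · obtain ⟨v, hv, rfl⟩ := hmisplaced
    have preimage_subset : ({w | d (σ w) = c v} : Finset V) ⊆ ({w | c w = c v} : Finset V) := by
      intro w hw
      by_contra hcw
      rw [mem_filter_univ] at hw hcw
      exact (hmin (σ * Equiv.swap v w) (mem_univ _)).not_gt
        (card_filter_swap_ne_lt (d := d ∘ σ) hv hw hcw)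
    have preimage_card : #{w | d (σ w) = c v} = #{w | d w = c v} := card_equiv σ (by simp)
    rw [← preimage_card, ← card_sdiff_of_subset preimage_subset]
    refine card_le_card fun w hw ↦ ?_
    rw [mem_filter_univ] at hw
    simp [hw.2, hw.2 ▸ hw.1]
  · rw [filter_false_of_mem fun v _ hv ↦ hmisplaced ⟨v, hv⟩, card_empty]
    exact Nat.zero_le _

end Alignment

section RobustShadow

variable {α V : Type*}

/-- The pairs that no set of at most `M` other vertices can block, i.e. that lie in an edge of `G`
avoiding it. For large `M` these behave like the edges of a 2-graph whose expansions embed into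
`G`. -/
def robustShadow (G : Finset (Finset V)) (M : ℕ) : SimpleGraph V where
  Adj u v := u ≠ v ∧ ∀ W : Finset V, #W ≤ M → u ∉ W → v ∉ W → ∃ e ∈ G, u ∈ e ∧ v ∈ e ∧ Disjoint e W
  symm := ⟨fun _ _ h ↦ ⟨h.1.symm, fun W hW hv hu ↦
    let ⟨e, he, hue, hve, heW⟩ := h.2 W hW hu hv
    ⟨e, he, hve, hue, heW⟩⟩⟩
  loopless := ⟨fun _ h ↦ h.1 rfl⟩

lemma robustShadow_adj {G : Finset (Finset V)} {M : ℕ} {u v : V} :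
    (robustShadow G M).Adj u v ↔ u ≠ v ∧ ∀ W : Finset V, #W ≤ M → u ∉ W → v ∉ W →
      ∃ e ∈ G, u ∈ e ∧ v ∈ e ∧ Disjoint e W :=
  Iff.rfl

lemma exists_pairwiseDisjoint {ι : Type*} {p : ι → Finset V → Prop} {m : ℕ} {s : Finset ι}
    (hcard : ∀ i ∈ s, ∀ D, p i D → #D ≤ m)
    (hext : ∀ i ∈ s, ∀ W : Finset V, #W ≤ #s * m → ∃ D, p i D ∧ Disjoint D W) :
    ∃ D : ι → Finset V, (∀ i ∈ s, p i (D i)) ∧ (s : Set ι).PairwiseDisjoint D := by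
  classical
  induction s using Finset.induction_on with
  | empty => exact ⟨fun _ ↦ ∅, by simp, by simp⟩
  | insert i s hi ih =>
    obtain ⟨D, hD, hdisj⟩ := ih (fun j hj ↦ hcard j (mem_insert_of_mem hj)) fun j hj W hW ↦
      hext j (mem_insert_of_mem hj) W (hW.trans
        (Nat.mul_le_mul_right m (card_le_card (subset_insert i s))))
    have card_used : #(s.biUnion D) ≤ #(insert i s) * m :=
      card_biUnion_le.trans <| (sum_le_card_nsmul s _ m fun j hj ↦
        hcard j (mem_insert_of_mem hj) _ (hD j hj)).trans
          (Nat.mul_le_mul_right m (card_le_card (subset_insert i s)))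
    obtain ⟨E, hE, hEdisj⟩ := hext i (mem_insert_self i s) _ card_used
    rw [disjoint_biUnion_right] at hEdisj
    have update_of_mem {j : ι} (hj : j ∈ s) : Function.update D i E j = D j :=
      Function.update_of_ne (ne_of_mem_of_not_mem hj hi) _ _
    refine ⟨Function.update D i E, fun j hj ↦ ?_, ?_⟩
    · rcases mem_insert.1 hj with rfl | hj
      · rwa [Function.update_self]
      · rw [update_of_mem hj]
        exact hD j hj
    · rw [coe_insert, Set.pairwiseDisjoint_insert_of_notMem (mod_cast hi)]
      refine ⟨fun a ha b hb hab ↦ ?_, fun j hj ↦ ?_⟩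
      · simpa [Function.onFun, update_of_mem ha, update_of_mem hb] using hdisj ha hb hab
      · simpa [update_of_mem hj] using hEdisj j hj

variable [DecidableEq V] [Fintype α] [DecidableEq α]

lemma sym2ToFinset_mk (a b : α) : sym2ToFinset s(a, b) = {a, b} := by
  ext x
  simp [sym2ToFinset]

variable {r : ℕ} {G : Finset (Finset V)} {F : SimpleGraph α} [DecidableRel F.Adj]

lemma containsCopy_expansion_of_petals {f : α → V} (hf : Function.Injective f)
    {D : F.edgeFinset → Finset V}
    (hcard : ∀ a, #(D a) = r - 2) (hedge : ∀ a, (sym2ToFinset a.1).image f ∪ D a ∈ G)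
    (hcore : ∀ a, Disjoint (D a) (univ.image f))
    (hdisj : Pairwise fun a b ↦ Disjoint (D a) (D b)) :
    ContainsCopy (expansion r F) G := by
  let g (a : F.edgeFinset) : D a ≃ Fin (r - 2) := equivFinOfCardEq (hcard a)
  have image_petal (a : F.edgeFinset) : univ.image (fun i ↦ ((g a).symm i : V)) = D a := by
    ext x
    simp only [mem_image, mem_univ, true_and]
    exact ⟨fun ⟨i, hi⟩ ↦ hi ▸ ((g a).symm i).2, fun hx ↦ ⟨g a ⟨x, hx⟩, by simp⟩⟩
  refine ⟨Sum.elim f fun p ↦ ((g p.1).symm p.2 : V), hf.sumElim ?_ ?_, ?_⟩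
  · rintro ⟨a, i⟩ ⟨b, j⟩ hij
    obtain rfl : a = b := by
      by_contra hab
      have common : ((g a).symm i : V) = (g b).symm j := hij
      exact disjoint_left.1 (hdisj hab) ((g a).symm i).2 (common ▸ ((g b).symm j).2)
    exact congrArg _ ((g a).symm.injective (Subtype.ext hij))
  · rintro x ⟨a, i⟩ hx
    exact disjoint_left.1 (hcore a) ((g a).symm i).2 (hx ▸ mem_image_of_mem f (mem_univ x))
  · intro e he
    obtain ⟨a, -, rfl⟩ := mem_image.1 he
    have := hedge a
    rw [← image_petal a] at this
    simpa [image_union, image_image, Function.comp_def] using this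

lemma exists_petal {M : ℕ} (hG : IsRGraph r G) {f : α → V}
    {a b : α} (hab : (robustShadow G M).Adj (f a) (f b)) {W : Finset V}
    (hW : Fintype.card α + #W ≤ M) :
    ∃ D, ((sym2ToFinset s(a, b)).image f ∪ D ∈ G ∧ #D = r - 2 ∧ Disjoint D (univ.image f)) ∧
      Disjoint D W := by
  have card_avoid : #((univ.image f ∪ W) \ {f a, f b}) ≤ M :=
    (card_le_card sdiff_subset).trans <| (card_union_le _ _).trans <|
      (Nat.add_le_add_right card_image_le _).trans hW
  obtain ⟨e, he, hae, hbe, hdisj⟩ := hab.2 _ card_avoid (by simp) (by simp)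
  have pair_subset : {f a, f b} ⊆ e := by simp [insert_subset_iff, hae, hbe]
  have petal_disj : Disjoint (e \ {f a, f b}) (univ.image f ∪ W) := by
    rwa [disjoint_sdiff_comm]
  rw [disjoint_union_right] at petal_disj
  refine ⟨e \ {f a, f b}, ⟨?_, ?_, petal_disj.1⟩, petal_disj.2⟩
  · rwa [sym2ToFinset_mk, image_insert, image_singleton, union_sdiff_of_subset pair_subset]
  · rw [card_sdiff_of_subset pair_subset, hG e he, card_pair hab.1]

lemma containsCopy_expansion_of_isContained_robustShadow {M : ℕ} (hG : IsRGraph r G)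
    (hM : Fintype.card α + #F.edgeFinset * (r - 2) ≤ M) (hF : F.IsContained (robustShadow G M)) :
    ContainsCopy (expansion r F) G := by
  obtain ⟨φ⟩ := hF
  let IsPetal (a : F.edgeFinset) (D : Finset V) : Prop :=
    (sym2ToFinset a.1).image φ ∪ D ∈ G ∧ #D = r - 2 ∧ Disjoint D (univ.image φ)
  have exists_petal_disjoint (a : F.edgeFinset) (W : Finset V)
      (hW : #W ≤ #F.edgeFinset * (r - 2)) : ∃ D, IsPetal a D ∧ Disjoint D W := by
    obtain ⟨⟨a, b⟩, hab⟩ := a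
    exact exists_petal hG (φ.toHom.map_adj (SimpleGraph.mem_edgeFinset.1 hab)) (by omega)
  obtain ⟨D, hD, hdisj⟩ := exists_pairwiseDisjoint (s := univ) (p := IsPetal)
    (fun _ _ _ hD ↦ hD.2.1.le) fun a _ W hW ↦ exists_petal_disjoint a W (by simpa using hW)
  exact containsCopy_expansion_of_petals φ.injective (fun a ↦ (hD a (mem_univ a)).2.1)
    (fun a ↦ (hD a (mem_univ a)).1) (fun a ↦ (hD a (mem_univ a)).2.2)
    fun a b hab ↦ hdisj (mem_coe.2 (mem_univ a)) (mem_coe.2 (mem_univ b)) hab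

lemma cliqueFree_robustShadow {ℓ M : ℕ} (hG : IsRGraph r G) (hM : ℓ + ℓ.choose 2 * (r - 2) ≤ M)
    (hfree : ¬ ContainsCopy (expansion r (⊤ : SimpleGraph (Fin ℓ))) G) :
    (robustShadow G M).CliqueFree ℓ := by
  by_contra hclique
  refine hfree (containsCopy_expansion_of_isContained_robustShadow hG ?_
    ((SimpleGraph.not_cliqueFree_iff_top_isContained ℓ).1 hclique))
  rwa [SimpleGraph.card_edgeFinset_top_eq_card_choose_two, Fintype.card_fin]

end RobustShadow

section EdgeCount

variable {V : Type*} [Fintype V] [DecidableEq V] {r s : ℕ} {G 𝒮 : Finset (Finset V)}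

lemma card_filter_subset_mul_pow_le (hG : IsRGraph r G) (S : Finset V) :
    #{e ∈ G | S ⊆ e} * Fintype.card V ^ #S ≤ Fintype.card V ^ r := by
  rcases le_or_gt #S r with hS | hS
  · rw [← pow_sub_mul_pow _ hS]
    refine Nat.mul_le_mul_right _ (le_trans ?_ (Nat.choose_le_pow _ _))
    rw [← card_univ, ← card_powersetCard]
    refine card_le_card_of_injOn (· \ S) (fun e he ↦ ?_) fun e he e' he' h ↦ ?_
    · obtain ⟨heG, hSe⟩ := mem_filter.1 he
      exact mem_powersetCard.2 ⟨subset_univ _, by rw [card_sdiff_of_subset hSe, hG e heG]⟩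
    · rw [← sdiff_union_of_subset (mem_filter.1 he).2, show e \ S = e' \ S from h,
        sdiff_union_of_subset (mem_filter.1 he').2]
  · rw [filter_false_of_mem fun e he hSe ↦ (hG e he ▸ card_le_card hSe).not_gt hS]
    simp

lemma card_filter_exists_subset_mul_pow_le (hG : IsRGraph r G) (h𝒮 : IsRGraph s 𝒮) :
    #{e ∈ G | ∃ S ∈ 𝒮, S ⊆ e} * Fintype.card V ^ s ≤ #𝒮 * Fintype.card V ^ r := by
  have filter_subset : {e ∈ G | ∃ S ∈ 𝒮, S ⊆ e} ⊆ 𝒮.biUnion fun S ↦ {e ∈ G | S ⊆ e} := by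
    intro e
    simp only [mem_filter, mem_biUnion]
    tauto
  calc #{e ∈ G | ∃ S ∈ 𝒮, S ⊆ e} * Fintype.card V ^ s
      ≤ ∑ S ∈ 𝒮, #{e ∈ G | S ⊆ e} * Fintype.card V ^ #S := by
        rw [sum_congr rfl fun S hS ↦ by rw [h𝒮 S hS], ← sum_mul]
        exact Nat.mul_le_mul_right _ ((card_le_card filter_subset).trans card_biUnion_le)
    _ ≤ #𝒮 * Fintype.card V ^ r :=
        sum_le_card_nsmul _ _ _ fun S _ ↦ card_filter_subset_mul_pow_le hG S

lemma card_filter_exists_mem_mul_le (hG : IsRGraph r G) (S : Finset V) :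
    #{e ∈ G | ∃ v ∈ S, v ∈ e} * Fintype.card V ≤ #S * Fintype.card V ^ r := by
  simpa [card_image_of_injective S singleton_injective]
    using card_filter_exists_subset_mul_pow_le (s := 1) (𝒮 := S.image singleton) hG
      (by simp [IsRGraph])

lemma card_filter_exists_pair_mul_sq_le (hG : IsRGraph r G) {E : Finset (V × V)}
    (hE : ∀ p ∈ E, p.1 ≠ p.2) :
    #{e ∈ G | ∃ p ∈ E, p.1 ∈ e ∧ p.2 ∈ e} * Fintype.card V ^ 2 ≤ #E * Fintype.card V ^ r := by
  have pairs : IsRGraph 2 (E.image fun p ↦ {p.1, p.2}) :=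
    forall_mem_image.2 fun p hp ↦ card_pair (hE p hp)
  have card_pairs := Nat.mul_le_mul_right (Fintype.card V ^ r)
    (card_image_le (s := E) (f := fun p ↦ ({p.1, p.2} : Finset V)))
  refine le_trans ?_ ((card_filter_exists_subset_mul_pow_le hG pairs).trans card_pairs)
  simp [insert_subset_iff]

omit [Fintype V] [DecidableEq V] in
lemma exists_blocking_set {M : ℕ} {u v : V} (huv : u ≠ v) (h : ¬ (robustShadow G M).Adj u v) :
    ∃ W : Finset V, #W ≤ M ∧ u ∉ W ∧ v ∉ W ∧ ∀ e ∈ G, u ∈ e → v ∈ e → ∃ w ∈ W, w ∈ e := by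
  simp only [robustShadow_adj, huv, ne_eq, not_false_eq_true, true_and] at h
  push Not at h
  obtain ⟨W, hW, hu, hv, hmeet⟩ := h
  refine ⟨W, hW, hu, hv, fun e he hue hve ↦ ?_⟩
  obtain ⟨w, hwe, hwW⟩ := not_disjoint_iff.1 (hmeet e he hue hve)
  exact ⟨w, hwW, hwe⟩

omit [DecidableEq V] in
/-- The triples consist of a pair outside the shadow and a vertex blocking that pair. -/
lemma exists_triples_of_not_isClique_robustShadow (G : Finset (Finset V)) (M : ℕ) :
    ∃ 𝒯 : Finset (Finset V), IsRGraph 3 𝒯 ∧ #𝒯 ≤ Fintype.card V ^ 2 * M ∧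
      ∀ e ∈ G, ¬ (robustShadow G M).IsClique (e : Set V) → ∃ T ∈ 𝒯, T ⊆ e := by
  classical
  have blocking (p : V × V) (hp : p.1 ≠ p.2 ∧ ¬ (robustShadow G M).Adj p.1 p.2) :=
    exists_blocking_set hp.1 hp.2
  choose! W hWcard hu hv hW using blocking
  let pairs : Finset (V × V) := {p | p.1 ≠ p.2 ∧ ¬ (robustShadow G M).Adj p.1 p.2}
  refine ⟨pairs.biUnion fun p ↦ (W p).image fun w ↦ {p.1, p.2, w}, fun T hT ↦ ?_, ?_,
    fun e he hclique ↦ ?_⟩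
  · obtain ⟨p, hp, hT⟩ := mem_biUnion.1 hT
    obtain ⟨w, hw, rfl⟩ := mem_image.1 hT
    replace hp := (mem_filter.1 hp).2
    exact card_eq_three.2 ⟨p.1, p.2, w, hp.1, (ne_of_mem_of_not_mem hw (hu p hp)).symm,
      (ne_of_mem_of_not_mem hw (hv p hp)).symm, rfl⟩
  · refine (card_biUnion_le_card_mul _ _ M fun p hp ↦ ?_).trans (Nat.mul_le_mul_right M ?_)
    · exact card_image_le.trans (hWcard p (mem_filter.1 hp).2)
    · exact (card_le_univ _).trans (by rw [Fintype.card_prod, sq])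
  · obtain ⟨u, hue, v, hve, huv, hadj⟩ :
        ∃ u ∈ e, ∃ v ∈ e, u ≠ v ∧ ¬ (robustShadow G M).Adj u v := by
      simpa [SimpleGraph.isClique_iff, Set.Pairwise] using hclique
    obtain ⟨w, hwW, hwe⟩ := hW (u, v) ⟨huv, hadj⟩ e he hue hve
    refine ⟨{u, v, w}, ?_, by simp [insert_subset_iff, hue, hve, hwe]⟩
    exact mem_biUnion.2 ⟨(u, v), mem_filter.2 ⟨mem_univ _, huv, hadj⟩, mem_image_of_mem _ hwW⟩

lemma card_sdiff_cliqueFinset_robustShadow_mul_le (hG : IsRGraph r G) (M : ℕ)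
    [DecidableRel (robustShadow G M).Adj] :
    #(G \ (robustShadow G M).cliqueFinset r) * Fintype.card V ≤ M * Fintype.card V ^ r := by
  obtain ⟨𝒯, h𝒯, card_triples, exists_triple⟩ := exists_triples_of_not_isClique_robustShadow G M
  have contains_triple :
      G \ (robustShadow G M).cliqueFinset r ⊆ {e ∈ G | ∃ T ∈ 𝒯, T ⊆ e} := by
    intro e he
    obtain ⟨heG, hclique⟩ := mem_sdiff.1 he
    rw [SimpleGraph.mem_cliqueFinset_iff, SimpleGraph.isNClique_iff] at hclique
    exact mem_filter.2 ⟨heG, exists_triple e heG fun h ↦ hclique ⟨h, hG e heG⟩⟩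
  rcases (Fintype.card V).eq_zero_or_pos with hn | hn
  · rw [hn, mul_zero]
    exact Nat.zero_le _
  refine Nat.le_of_mul_le_mul_left ?_ (pow_pos hn 2)
  calc Fintype.card V ^ 2 * (#(G \ (robustShadow G M).cliqueFinset r) * Fintype.card V)
      = #(G \ (robustShadow G M).cliqueFinset r) * Fintype.card V ^ 3 := by ring
    _ ≤ #{e ∈ G | ∃ T ∈ 𝒯, T ⊆ e} * Fintype.card V ^ 3 :=
        Nat.mul_le_mul_right _ (card_le_card contains_triple)
    _ ≤ #𝒯 * Fintype.card V ^ r := card_filter_exists_subset_mul_pow_le hG h𝒯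
    _ ≤ Fintype.card V ^ 2 * M * Fintype.card V ^ r := Nat.mul_le_mul_right _ card_triples
    _ = Fintype.card V ^ 2 * (M * Fintype.card V ^ r) := mul_assoc _ _ _

lemma card_mul_le_card_cliqueFinset_robustShadow (hG : IsRGraph r G) (M : ℕ)
    [DecidableRel (robustShadow G M).Adj] :
    #G * Fintype.card V
      ≤ #((robustShadow G M).cliqueFinset r) * Fintype.card V + M * Fintype.card V ^ r :=
  calc #G * Fintype.card V
      ≤ (#(G \ (robustShadow G M).cliqueFinset r) + #((robustShadow G M).cliqueFinset r))
          * Fintype.card V := Nat.mul_le_mul_right _ card_le_card_sdiff_add_card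
    _ ≤ _ := by
        rw [add_mul, add_comm]
        exact Nat.add_le_add_left (card_sdiff_cliqueFinset_robustShadow_mul_le hG M) _

end EdgeCount

section TuranNumber

lemma turanGraph_eq_cliqueFinset (r n k : ℕ) :
    turanGraph r n k = (SimpleGraph.turanGraph n k).cliqueFinset r := by
  ext e
  rw [turanGraph, mem_filter, mem_powersetCard_univ, SimpleGraph.mem_cliqueFinset_iff,
    SimpleGraph.isNClique_iff, and_comm, SimpleGraph.isClique_iff]
  refine and_congr_left fun _ ↦ forall₂_congr fun u _ ↦ forall₂_congr fun v _ ↦ ?_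
  rw [SimpleGraph.turanGraph_adj, ne_eq, ne_eq, not_imp_not]

lemma div_le_card_filter_mod_eq {n k i : ℕ} (hi : i < k) :
    n / k ≤ #{v : Fin n | (v : ℕ) % k = i} := by
  have card_eq_count : #{v : Fin n | (v : ℕ) % k = i} = n.count (· ≡ i [MOD k]) := by
    rw [card_filter, Fin.sum_univ_eq_sum_range (fun v ↦ if v % k = i then 1 else 0),
      ← card_filter, Nat.count_eq_card_filter_range]
    simp only [Nat.ModEq, Nat.mod_eq_of_lt hi]
  rw [card_eq_count, Nat.count_modEq_card n (by omega)]
  exact Nat.le_add_right _ _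

lemma sub_mul_div_le_card_commonNeighborFinset_turanGraph {n : ℕ} (k : ℕ)
    (B : Finset (Fin n)) :
    (k - #B) * (n / k) ≤ #(commonNeighborFinset (SimpleGraph.turanGraph n k) B) := by
  let used : Finset ℕ := B.image fun v : Fin n ↦ (v : ℕ) % k
  let free : Finset ℕ := range k \ used
  have card_free : k - #B ≤ #free :=
    calc k - #B ≤ k - #used := Nat.sub_le_sub_left card_image_le k
      _ = #(range k) - #used := by rw [card_range]
      _ ≤ #free := le_card_sdiff used (range k)
  have free_subset : univ.filter (fun v : Fin n ↦ (v : ℕ) % k ∈ free)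
      ⊆ commonNeighborFinset (SimpleGraph.turanGraph n k) B := by
    intro v hv
    have hmod := (mem_sdiff.1 (mem_filter.1 hv).2).2
    exact mem_commonNeighborFinset.2 fun b hb h ↦ hmod (mem_image.2 ⟨b, hb, h⟩)
  calc (k - #B) * (n / k) ≤ #free * (n / k) := Nat.mul_le_mul_right _ card_free
    _ ≤ ∑ i ∈ free, #{v : Fin n | (v : ℕ) % k = i} := card_nsmul_le_sum _ _ _ fun i hi ↦
        div_le_card_filter_mod_eq (mem_range.1 (mem_sdiff.1 hi).1)
    _ = #{v : Fin n | (v : ℕ) % k ∈ free} := sum_card_fiberwise_eq_card_filter _ _ _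
    _ ≤ _ := card_le_card free_subset

lemma choose_mul_div_pow_le_turanNum (r n k : ℕ) :
    k.choose r * (n / k) ^ r ≤ turanNum r n k := by
  rw [turanNum, turanGraph_eq_cliqueFinset]
  set P := SimpleGraph.turanGraph n k
  induction r with
  | zero =>
    rw [Nat.choose_zero_right, pow_zero]
    exact card_pos.2 ⟨∅, by simp [SimpleGraph.mem_cliqueFinset_iff, SimpleGraph.isNClique_iff]⟩
  | succ r ih =>
    refine Nat.le_of_mul_le_mul_left ?_ r.succ_pos
    calc (r + 1) * (k.choose (r + 1) * (n / k) ^ (r + 1))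
        = k.choose r * (n / k) ^ r * ((k - r) * (n / k)) := by
          rw [← mul_assoc, mul_comm (r + 1), Nat.choose_succ_right_eq]; ring
      _ ≤ #(P.cliqueFinset r) * ((k - r) * (n / k)) := Nat.mul_le_mul_right _ ih
      _ ≤ ∑ B ∈ P.cliqueFinset r, #(commonNeighborFinset P B) := by
          refine card_nsmul_le_sum _ _ _ fun B hB ↦ ?_
          rw [← (SimpleGraph.mem_cliqueFinset_iff.1 hB).card_eq]
          exact sub_mul_div_le_card_commonNeighborFinset_turanGraph k B
      _ = (r + 1) * #(P.cliqueFinset (r + 1)) := (succ_mul_card_cliqueFinset_succ P r).symm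

/-- The constant `ρ = C(k, r) / k ^ r` for which the balanced complete `k`-partite `r`-graph on `n`
vertices has `(ρ + o(1)) * n ^ r` edges. -/
noncomputable def partiteDensity (r k : ℕ) : ℝ := k.choose r / (k : ℝ) ^ r

lemma partiteDensity_nonneg (r k : ℕ) : 0 ≤ partiteDensity r k := by
  unfold partiteDensity
  positivity

lemma partiteDensity_pos {r k : ℕ} (hrk : r ≤ k) : 0 < partiteDensity r k := by
  have := Nat.choose_pos hrk
  rcases k.eq_zero_or_pos with rfl | hk
  · obtain rfl : r = 0 := by omega
    simp [partiteDensity]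
  · unfold partiteDensity
    positivity

lemma sub_one_lt_natCast_div (n k : ℕ) : (n : ℝ) / k - 1 < (n / k : ℕ) := by
  rw [← Nat.floor_div_eq_div (K := ℝ)]
  exact Nat.sub_one_lt_floor _

lemma partiteDensity_mul_le_turanNum {k n : ℕ} (hk : 0 < k) (hkn : k ≤ n) (r : ℕ) :
    partiteDensity r k * (1 - r * k / n) * (n : ℝ) ^ r ≤ turanNum r n k := by
  have hn : (0 : ℝ) < n := by exact_mod_cast hk.trans_le hkn
  have ratio_le_one : (k : ℝ) / n ≤ 1 := div_le_one_of_le₀ (mod_cast hkn) hn.le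
  have bernoulli : 1 - r * (k : ℝ) / n ≤ (1 - k / n) ^ r := by
    simpa only [mul_neg, ← sub_eq_add_neg, ← mul_div_assoc]
      using one_add_mul_le_pow (show -2 ≤ -((k : ℝ) / n) by linarith) r
  calc partiteDensity r k * (1 - r * k / n) * (n : ℝ) ^ r
      ≤ partiteDensity r k * (1 - k / n) ^ r * (n : ℝ) ^ r := by
        have := partiteDensity_nonneg r k
        gcongr
    _ = k.choose r * ((n : ℝ) / k - 1) ^ r := by
        rw [partiteDensity, div_mul_eq_mul_div, div_mul_eq_mul_div, mul_assoc, ← mul_pow,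
          mul_div_assoc, ← div_pow]
        congr 2
        field_simp
    _ ≤ k.choose r * ((n / k : ℕ) : ℝ) ^ r := by
        have : (0 : ℝ) ≤ n / k - 1 := by
          rw [sub_nonneg, one_le_div (by positivity)]
          exact_mod_cast hkn
        gcongr
        exact (sub_one_lt_natCast_div n k).le
    _ ≤ turanNum r n k := mod_cast choose_mul_div_pow_le_turanNum r n k

lemma pow_div_le_choose {r n : ℕ} (hrn : 2 * r ≤ n) :
    (n : ℝ) ^ r / (2 ^ r * r.factorial) ≤ n.choose r := by
  have half_le : (n : ℝ) / 2 ≤ (n + 1 - r : ℕ) := by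
    rw [div_le_iff₀ two_pos]
    exact_mod_cast (by omega : n ≤ (n + 1 - r) * 2)
  calc (n : ℝ) ^ r / (2 ^ r * r.factorial) = (n / 2) ^ r / r.factorial := by
        rw [div_pow, div_div]
    _ ≤ ((n + 1 - r : ℕ) : ℝ) ^ r / r.factorial := by gcongr
    _ ≤ n.choose r := Nat.pow_le_choose r n

end TuranNumber

section Stability

lemma le_two_mul_card_edgeFinset_of_le_card_cliqueFinset {V : Type*} [Fintype V] [DecidableEq V]
    {P : SimpleGraph V} [DecidableRel P.Adj] {r k : ℕ} {δ : ℝ} (hP : P.CliqueFree (k + 1))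
    (hr : 2 ≤ r) (hrk : r ≤ k)
    (hcliques : partiteDensity r k * (1 - δ) * (Fintype.card V : ℝ) ^ r ≤ #(P.cliqueFinset r)) :
    (1 - 1 / k) * (1 - δ) * (Fintype.card V : ℝ) ^ 2 ≤ 2 * #P.edgeFinset := by
  have hk : (0 : ℝ) < k := by exact_mod_cast (by omega : 0 < k)
  have hchoose : (0 : ℝ) < k.choose r := mod_cast Nat.choose_pos hrk
  rcases (Fintype.card V).eq_zero_or_pos with hn | hn
  · simp [hn]
  have maclaurin : (#(P.cliqueFinset r) : ℝ) * k ^ r * (k.choose 2 * (Fintype.card V : ℝ) ^ 2)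
      ≤ #P.edgeFinset * k ^ 2 * (k.choose r * (Fintype.card V : ℝ) ^ r) := by
    rw [← card_cliqueFinset_two]
    exact_mod_cast card_cliqueFinset_mul_le hP hr hrk
  replace hn : (0 : ℝ) < Fintype.card V := mod_cast hn
  set n : ℝ := (Fintype.card V : ℝ)
  refine le_of_mul_le_mul_left ?_ (show 0 < k ^ 2 * (k.choose r * n ^ r) by positivity)
  calc k ^ 2 * (k.choose r * n ^ r) * ((1 - 1 / k) * (1 - δ) * n ^ 2)
      = 2 * (partiteDensity r k * (1 - δ) * n ^ r * k ^ r * (k.choose 2 * n ^ 2)) := by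
        rw [partiteDensity, Nat.cast_choose_two]
        field_simp
    _ ≤ 2 * (#(P.cliqueFinset r) * k ^ r * (k.choose 2 * n ^ 2)) := by gcongr
    _ ≤ 2 * (#P.edgeFinset * k ^ 2 * (k.choose r * n ^ r)) := by gcongr
    _ = k ^ 2 * (k.choose r * n ^ r) * (2 * #P.edgeFinset) := by ring

variable {n r k : ℕ} {G : Finset (Finset (Fin n))}

lemma exists_perm_card_mod_ne_le {τ : ℝ} {c : Fin n → ℕ} (hc : ∀ v, c v < k)
    (hτ : 0 ≤ τ) (hbalanced : ∀ i < k, (#{v | c v = i} : ℝ) ≤ n / k + τ * n) :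
    ∃ σ : Equiv.Perm (Fin n), (#{v | (σ v : ℕ) % k ≠ c v} : ℝ) ≤ k * (τ * n + 1) := by
  obtain ⟨σ, hσ⟩ := exists_perm_card_ne_le c (fun v : Fin n ↦ (v : ℕ) % k)
    (fun v ↦ mem_range.2 (hc v))
  refine ⟨σ, (Nat.cast_le.2 hσ).trans ?_⟩
  rw [Nat.cast_sum]
  refine (sum_le_card_nsmul (range k) _ (τ * n + 1) fun i hi ↦ ?_).trans_eq
    (by rw [card_range, nsmul_eq_mul])
  rw [mem_range] at hi
  have class_size : ((n / k : ℕ) : ℝ) ≤ #{v : Fin n | (v : ℕ) % k = i} :=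
    mod_cast div_le_card_filter_mod_eq hi
  have := hbalanced i hi
  have := sub_one_lt_natCast_div n k
  rcases le_total #{v | c v = i} #{v : Fin n | (v : ℕ) % k = i} with hle | hle
  · rw [Nat.sub_eq_zero_of_le hle, Nat.cast_zero]
    positivity
  · rw [Nat.cast_sub hle]
    linarith

lemma exists_conflict_of_image_notMem_turanGraph {P : SimpleGraph (Fin n)} {e : Finset (Fin n)}
    (he : P.IsNClique r e) {σ : Equiv.Perm (Fin n)} (hσ : e.image σ ∉ turanGraph r n k)
    (c : Fin n → ℕ) :
    (∃ v ∈ e, (σ v : ℕ) % k ≠ c v) ∨ ∃ u ∈ e, ∃ v ∈ e, P.Adj u v ∧ c u = c v := by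
  by_contra! h
  obtain ⟨aligned, proper⟩ := h
  refine hσ ?_
  rw [turanGraph_eq_cliqueFinset, SimpleGraph.mem_cliqueFinset_iff, SimpleGraph.isNClique_iff,
    card_image_of_injective _ σ.injective, coe_image]
  refine ⟨?_, he.card_eq⟩
  rintro _ ⟨u, hu, rfl⟩ _ ⟨v, hv, rfl⟩ huv
  rw [SimpleGraph.turanGraph_adj, aligned u hu, aligned v hv]
  exact proper u hu v hv (he.isClique hu hv (ne_of_apply_ne σ huv))

lemma image_sdiff_turanGraph_subset (P : SimpleGraph (Fin n)) [DecidableRel P.Adj]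
    (σ : Equiv.Perm (Fin n)) (c : Fin n → ℕ) :
    (G.image fun e ↦ e.image σ) \ turanGraph r n k
      ⊆ ((G \ P.cliqueFinset r) ∪
        ({e ∈ G | ∃ v ∈ ({v | (σ v : ℕ) % k ≠ c v} : Finset (Fin n)), v ∈ e} ∪
          {e ∈ G | ∃ p ∈ ({p | P.Adj p.1 p.2 ∧ c p.1 = c p.2} : Finset (Fin n × Fin n)),
            p.1 ∈ e ∧ p.2 ∈ e})).image fun e ↦ e.image σ := by
  intro x hx
  obtain ⟨hx, hxT⟩ := mem_sdiff.1 hx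
  obtain ⟨e, he, rfl⟩ := mem_image.1 hx
  refine mem_image_of_mem _ ?_
  by_cases hclique : e ∈ P.cliqueFinset r
  · rw [SimpleGraph.mem_cliqueFinset_iff] at hclique
    refine mem_union_right _ (mem_union.2 ?_)
    refine (exists_conflict_of_image_notMem_turanGraph hclique hxT c).imp ?_ ?_
    · exact fun ⟨v, hv, hne⟩ ↦ mem_filter.2 ⟨he, v, (mem_filter_univ v).2 hne, hv⟩
    · exact fun ⟨u, hu, v, hv, huv⟩ ↦
        mem_filter.2 ⟨he, (u, v), (mem_filter_univ _).2 huv, hu, hv⟩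
  · exact mem_union_left _ (mem_sdiff.2 ⟨he, hclique⟩)

lemma card_image_sdiff_turanGraph_mul_sq_le (hG : IsRGraph r G) (P : SimpleGraph (Fin n))
    [DecidableRel P.Adj] (σ : Equiv.Perm (Fin n)) (c : Fin n → ℕ) :
    #((G.image fun e ↦ e.image σ) \ turanGraph r n k) * n ^ 2
      ≤ #(G \ P.cliqueFinset r) * n ^ 2 + (#{v | (σ v : ℕ) % k ≠ c v} * n
        + #{p : Fin n × Fin n | P.Adj p.1 p.2 ∧ c p.1 = c p.2}) * n ^ r := by
  have covered := card_le_card (image_sdiff_turanGraph_subset (G := G) (r := r) (k := k) P σ c)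
  generalize ({v | (σ v : ℕ) % k ≠ c v} : Finset (Fin n)) = S at covered ⊢
  generalize hE : ({p | P.Adj p.1 p.2 ∧ c p.1 = c p.2} : Finset (Fin n × Fin n)) = E at covered ⊢
  have card_misaligned : #{e ∈ G | ∃ v ∈ S, v ∈ e} * n ≤ #S * n ^ r := by
    -- On `Fin n` the two filters carry different decidability instances.
    convert card_filter_exists_mem_mul_le hG S <;> exact (Fintype.card_fin n).symm
  have card_monochromatic := card_filter_exists_pair_mul_sq_le hG (E := E)
    (by simpa [← hE] using fun u v (huv : P.Adj u v) _ ↦ huv.ne)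
  rw [Fintype.card_fin] at card_monochromatic
  have card_missing : #((G.image fun e ↦ e.image σ) \ turanGraph r n k)
      ≤ #(G \ P.cliqueFinset r)
        + (#{e ∈ G | ∃ v ∈ S, v ∈ e} + #{e ∈ G | ∃ p ∈ E, p.1 ∈ e ∧ p.2 ∈ e}) :=
    (covered.trans card_image_le).trans <|
      (card_union_le _ _).trans (Nat.add_le_add_left (card_union_le _ _) _)
  calc #((G.image fun e ↦ e.image σ) \ turanGraph r n k) * n ^ 2
      ≤ (#(G \ P.cliqueFinset r) + (#{e ∈ G | ∃ v ∈ S, v ∈ e}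
          + #{e ∈ G | ∃ p ∈ E, p.1 ∈ e ∧ p.2 ∈ e})) * n ^ 2 :=
        Nat.mul_le_mul_right _ card_missing
    _ = #(G \ P.cliqueFinset r) * n ^ 2 + (#{e ∈ G | ∃ v ∈ S, v ∈ e} * n * n
          + #{e ∈ G | ∃ p ∈ E, p.1 ∈ e ∧ p.2 ∈ e} * n ^ 2) := by ring
    _ ≤ #(G \ P.cliqueFinset r) * n ^ 2 + (#S * n ^ r * n + #E * n ^ r) :=
        Nat.add_le_add_left
          (Nat.add_le_add (Nat.mul_le_mul_right n card_misaligned) card_monochromatic) _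
    _ = #(G \ P.cliqueFinset r) * n ^ 2 + (#S * n + #E) * n ^ r := by ring

lemma le_two_mul_card_edgeFinset_robustShadow (hr : 2 ≤ r) (hrk : r ≤ k) (hn : 0 < n)
    (hG : IsRGraph r G) {M : ℕ} [DecidableRel (robustShadow G M).Adj]
    (hfree : (robustShadow G M).CliqueFree (k + 1)) {δ : ℝ} (hδ : 0 ≤ δ)
    (hcard : (partiteDensity r k * (1 - δ) + M / n) * (n : ℝ) ^ r ≤ #G) :
    (1 - 1 / k - δ) * (n : ℝ) ^ 2 ≤ 2 * #(robustShadow G M).edgeFinset := by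
  have hn' : (0 : ℝ) < n := mod_cast hn
  have cliques : (#G : ℝ) * n
      ≤ #((robustShadow G M).cliqueFinset r) * n + M * (n : ℝ) ^ r := by
    exact_mod_cast Fintype.card_fin n ▸ card_mul_le_card_cliqueFinset_robustShadow hG M
  have many_cliques :
      partiteDensity r k * (1 - δ) * (n : ℝ) ^ r ≤ #((robustShadow G M).cliqueFinset r) := by
    refine le_of_mul_le_mul_right ?_ hn'
    calc partiteDensity r k * (1 - δ) * (n : ℝ) ^ r * n
        = (partiteDensity r k * (1 - δ) + M / n) * (n : ℝ) ^ r * n - M * (n : ℝ) ^ r := by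
          field_simp
          ring
      _ ≤ #G * n - M * (n : ℝ) ^ r := by gcongr
      _ ≤ #((robustShadow G M).cliqueFinset r) * n := by linarith
  have turan_density := le_two_mul_card_edgeFinset_of_le_card_cliqueFinset hfree hr hrk
    (δ := δ) (by rwa [Fintype.card_fin])
  rw [Fintype.card_fin] at turan_density
  refine (mul_le_mul_of_nonneg_right ?_ (by positivity)).trans turan_density
  linarith [show 0 ≤ 1 / (k : ℝ) * δ by positivity]

lemma exists_perm_card_image_sdiff_turanGraph_le (hr : 2 ≤ r) (hrk : r ≤ k) (hn : 0 < n)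
    (hG : IsRGraph r G) {M : ℕ} (hfree : (robustShadow G M).CliqueFree (k + 1)) {τ : ℝ}
    (hτ : 0 ≤ τ)
    (hcard : (partiteDensity r k * (1 - τ ^ 2) + M / n) * (n : ℝ) ^ r ≤ #G) :
    ∃ σ : Equiv.Perm (Fin n), (#((G.image fun e ↦ e.image σ) \ turanGraph r n k) : ℝ)
      ≤ ((M + k) / n + k * τ + τ ^ 2) * (n : ℝ) ^ r := by
  classical
  have many_edges :=
    le_two_mul_card_edgeFinset_robustShadow hr hrk hn hG hfree (sq_nonneg τ) hcard
  set P := robustShadow G M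
  have hn' : (0 : ℝ) < n := mod_cast hn
  obtain ⟨c, hc, few_monochromatic, balanced⟩ :=
    exists_balanced_coloring (by omega : 0 < k) hfree hτ (by rwa [Fintype.card_fin])
  rw [Fintype.card_fin] at few_monochromatic balanced
  obtain ⟨σ, few_misaligned⟩ := exists_perm_card_mod_ne_le hc hτ balanced
  have few_nonclique : (#(G \ P.cliqueFinset r) : ℝ) * n ≤ M * (n : ℝ) ^ r := by
    exact_mod_cast Fintype.card_fin n ▸ card_sdiff_cliqueFinset_robustShadow_mul_le hG M
  have missing := (Nat.cast_le (α := ℝ)).2 (card_image_sdiff_turanGraph_mul_sq_le (k := k) hG P σ c)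
  push_cast at missing
  refine ⟨σ, le_of_mul_le_mul_right ?_ (pow_pos hn' 2)⟩
  calc (#((G.image fun e ↦ e.image σ) \ turanGraph r n k) : ℝ) * (n : ℝ) ^ 2
      ≤ #(G \ P.cliqueFinset r) * n * n + (#{v | (σ v : ℕ) % k ≠ c v} * n
          + #{p : Fin n × Fin n | P.Adj p.1 p.2 ∧ c p.1 = c p.2}) * (n : ℝ) ^ r :=
        missing.trans_eq (by ring)
    _ ≤ M * (n : ℝ) ^ r * n + (k * (τ * n + 1) * n + τ ^ 2 * (n : ℝ) ^ 2) * (n : ℝ) ^ r := by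
        gcongr
    _ = ((M + k) / n + k * τ + τ ^ 2) * (n : ℝ) ^ r * (n : ℝ) ^ 2 := by
        field_simp
        ring

lemma card_sdiff_union_sdiff {α : Type*} [DecidableEq α] (A B : Finset α) :
    (#((A \ B) ∪ (B \ A)) : ℝ) = 2 * #(A \ B) + #B - #A := by
  have card_union : (#(A \ B) + #B : ℝ) = #(B \ A) + #A := by
    exact_mod_cast (card_sdiff_add_card A B).trans
      ((congrArg card (union_comm A B)).trans (card_sdiff_add_card B A).symm)
  rw [card_union_of_disjoint (disjoint_sdiff_sdiff), Nat.cast_add]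
  linarith

lemma epsClose_of_card_image_sdiff_le {T : Finset (Finset (Fin n))} {σ : Equiv.Perm (Fin n)}
    {δ η ε : ℝ} (hrn : 2 * r ≤ n)
    (hσ : (#((G.image fun e ↦ e.image σ) \ T) : ℝ) ≤ δ * (n : ℝ) ^ r)
    (hcard : (#T : ℝ) - η * (n : ℝ) ^ r ≤ #G) (hδ : 2 * δ + η ≤ ε / (2 ^ r * r.factorial))
    (hε : 0 ≤ ε) :
    EpsClose r n ε G T := by
  refine ⟨σ, ?_⟩
  rw [card_sdiff_union_sdiff, card_image_of_injective G (image_injective σ.injective)]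
  calc 2 * (#((G.image fun e ↦ e.image σ) \ T) : ℝ) + #T - #G
      ≤ (2 * δ + η) * (n : ℝ) ^ r := by linarith
    _ ≤ ε / (2 ^ r * r.factorial) * (n : ℝ) ^ r := by gcongr
    _ = ε * ((n : ℝ) ^ r / (2 ^ r * r.factorial)) := by ring
    _ ≤ ε * n.choose r := by gcongr; exact pow_div_le_choose hrn

lemma exists_stability_parameters (r k M : ℕ) {ρ ε : ℝ} (hρ : 0 < ρ) (hε : 0 < ε) :
    ∃ τ η : ℝ, 0 ≤ τ ∧ 0 < η ∧ ∀ᶠ n : ℕ in Filter.atTop,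
      ρ * (1 - τ ^ 2) + M / n ≤ ρ * (1 - r * k / n) - η ∧
      2 * ((M + k) / n + k * τ + τ ^ 2) + η ≤ ε := by
  set τ : ℝ := min 1 (ε / (4 * (k + 1)))
  have hτ : 0 < τ := by positivity
  have colour_error : 2 * (k * τ + τ ^ 2) ≤ ε / 2 := by
    have : 4 * (k + 1) * τ ≤ ε := by
      rw [mul_comm, ← le_div_iff₀ (by positivity)]
      exact min_le_right _ _
    nlinarith [min_le_left 1 (ε / (4 * ((k : ℝ) + 1)))]
  refine ⟨τ, min (ρ * τ ^ 2 / 2) (ε / 4), hτ.le, by positivity, ?_⟩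
  have eventually_le (C : ℝ) {δ : ℝ} (hδ : 0 < δ) : ∀ᶠ n : ℕ in Filter.atTop, C / n ≤ δ :=
    (tendsto_const_div_atTop_nhds_zero_nat C).eventually_le_const hδ
  filter_upwards [eventually_le (M + ρ * (r * k)) (show 0 < ρ * τ ^ 2 / 2 by positivity),
    eventually_le (2 * (M + k)) (show 0 < ε / 4 by positivity)] with n turan_error shadow_error
  constructor
  · have := min_le_left (ρ * τ ^ 2 / 2) (ε / 4)
    rw [add_div, mul_div_assoc] at turan_error
    linarith
  · have := min_le_right (ρ * τ ^ 2 / 2) (ε / 4)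
    rw [mul_div_assoc] at shadow_error
    linarith

end Stability

/-- **Lemma (Pikhurko's stability for expanded cliques).**  Fix `ℓ > r ≥ 2`.  For every
`ε₁ > 0` there are `η₁ > 0` and `n₀` such that any `H_{K_ℓ}^(r)`-free `r`-graph `G` of order
`n ≥ n₀` with at least `t_r(n, ℓ-1) - η₁·n^r` edges is `ε₁`-close to `T_r(n, ℓ-1)`. -/
theorem stability_expanded_clique (r ℓ : ℕ) (hr : 2 ≤ r) (hrl : r < ℓ)
    (ε₁ : ℝ) (hε₁ : 0 < ε₁) :
    ∃ η₁ : ℝ, 0 < η₁ ∧ ∃ n₀ : ℕ, ∀ n : ℕ, n₀ ≤ n →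
      ∀ G : Finset (Finset (Fin n)), IsRGraph r G →
        ¬ ContainsCopy (expansion r (⊤ : SimpleGraph (Fin ℓ))) G →
        (turanNum r n (ℓ - 1) : ℝ) - η₁ * (n : ℝ) ^ r ≤ (G.card : ℝ) →
        EpsClose r n ε₁ G (turanGraph r n (ℓ - 1)) := by
  obtain ⟨k, rfl⟩ : ∃ k, ℓ = k + 1 := ⟨ℓ - 1, by omega⟩
  have hrk : r ≤ k := by omega
  obtain ⟨τ, η, hτ, hη, hlarge⟩ := exists_stability_parameters r k
    (k + 1 + (k + 1).choose 2 * (r - 2)) (partiteDensity_pos hrk)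
    (show 0 < ε₁ / (2 ^ r * r.factorial) by positivity)
  obtain ⟨n₀, hn₀⟩ := Filter.eventually_atTop.1 (hlarge.and (Filter.eventually_ge_atTop (2 * k)))
  refine ⟨η, hη, n₀, fun n hn G hG hfree hcard ↦ ?_⟩
  obtain ⟨⟨dense, close⟩, hkn⟩ := hn₀ n hn
  rw [Nat.add_sub_cancel] at hcard ⊢
  have turan_lower_bound := partiteDensity_mul_le_turanNum (by omega) (by omega : k ≤ n) r
  obtain ⟨σ, hσ⟩ := exists_perm_card_image_sdiff_turanGraph_le hr hrk (by omega) hG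
    (cliqueFree_robustShadow hG le_rfl hfree) hτ <|
      calc _ ≤ (partiteDensity r k * (1 - r * k / n) - η) * (n : ℝ) ^ r := by gcongr
        _ ≤ turanNum r n k - η * (n : ℝ) ^ r := by linarith
        _ ≤ #G := hcard
  exact epsClose_of_card_image_sdiff_le (by omega) hσ hcard close hε₁.le
end

section
/- Every dense r-graph covers pairs; that is, if G is an r-graph such that λ(G') < λ(G) for every proper subgraph G' of G, then for every pair of vertices u, v of G there is an edge of G containing both u and v. -/
open Finset

/-!
If no edge contains both `u` and `v`, then along the direction `e_u - e_v` every edge monomial has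
at most one varying factor, so `p_G` is affine on the segment of weightings obtained from a given
one by trading weight between `u` and `v`. It therefore does not decrease on the way to one of the
two endpoints, where `u` or `v` has weight zero and only the edges avoiding that vertex contribute.
Hence deleting one of `u`, `v` does not lower the Lagrangian.
-/

section

variable {α : Type*}

theorem nonMemberSubfamily_ssubset [DecidableEq α] {G : Finset (Finset α)} {v : α}
    (hv : ∃ e ∈ G, v ∈ e) : G.nonMemberSubfamily v ⊂ G :=
  Finset.filter_ssubset.2 (by simpa only [not_not] using hv)

theorem exists_forall_prod_add_mul_eq {R : Type*} [CommSemiring R] {e : Finset α} {d : α → R}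
    (h : ((e : Set α) ∩ Function.support d).Subsingleton) (w : α → R) :
    ∃ b, ∀ t, ∏ i ∈ e, (w i + t * d i) = ∏ i ∈ e, w i + t * b := by
  classical
  by_cases hd : ∃ j ∈ e, d j ≠ 0
  · obtain ⟨j, hj, hdj⟩ := hd
    have hoff : ∀ i ∈ e.erase j, d i = 0 := fun i hi ↦ by
      rw [Finset.mem_erase] at hi
      by_contra hdi
      exact hi.1 (h ⟨hi.2, hdi⟩ ⟨hj, hdj⟩)
    refine ⟨d j * ∏ i ∈ e.erase j, w i, fun t ↦ ?_⟩
    have hconst : ∏ i ∈ e.erase j, (w i + t * d i) = ∏ i ∈ e.erase j, w i :=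
      Finset.prod_congr rfl fun i hi ↦ by rw [hoff i hi, mul_zero, add_zero]
    rw [← Finset.mul_prod_erase e _ hj, ← Finset.mul_prod_erase e w hj, hconst]
    ring
  · push Not at hd
    refine ⟨0, fun t ↦ ?_⟩
    rw [mul_zero, add_zero]
    exact Finset.prod_congr rfl fun i hi ↦ by rw [hd i hi, mul_zero, add_zero]

/-- The polynomial `p_G` whose maximum over the standard simplex is the Lagrangian of `G`. -/
def lagrangianPoly (G : Finset (Finset α)) (w : α → ℝ) : ℝ :=
  ∑ e ∈ G, ∏ i ∈ e, w i

theorem continuous_lagrangianPoly (G : Finset (Finset α)) : Continuous (lagrangianPoly G) := by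
  unfold lagrangianPoly
  fun_prop

theorem lagrangianPoly_nonMemberSubfamily [DecidableEq α] {w : α → ℝ} {v : α} (hv : w v = 0)
    (G : Finset (Finset α)) : lagrangianPoly (G.nonMemberSubfamily v) w = lagrangianPoly G w :=
  Finset.sum_filter_of_ne fun _ _ hne hve ↦ hne (Finset.prod_eq_zero hve hv)

theorem exists_forall_lagrangianPoly_add_smul_eq {G : Finset (Finset α)} {d : α → ℝ}
    (h : ∀ e ∈ G, ((e : Set α) ∩ Function.support d).Subsingleton) (w : α → ℝ) :
    ∃ b, ∀ t : ℝ, lagrangianPoly G (w + t • d) = lagrangianPoly G w + t * b := by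
  choose! b hb using fun e he ↦ exists_forall_prod_add_mul_eq (h e he) w
  refine ⟨∑ e ∈ G, b e, fun t ↦ ?_⟩
  calc lagrangianPoly G (w + t • d) = ∑ e ∈ G, (∏ i ∈ e, w i + t * b e) :=
        Finset.sum_congr rfl fun e he ↦ hb e he t
    _ = lagrangianPoly G w + t * ∑ e ∈ G, b e := by
        rw [Finset.sum_add_distrib, Finset.mul_sum, lagrangianPoly]

section Transfer

variable [DecidableEq α]

/-- The weighting obtained from `w` by moving the whole weight of `v` to `u`; it is written as a
translate of `w` so that both `transferWeight u v w` and `transferWeight v u w` lie on the line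
through `w` in direction `Pi.single u 1 - Pi.single v 1`. -/
def transferWeight (u v : α) (w : α → ℝ) : α → ℝ :=
  w + w v • (Pi.single u 1 - Pi.single v 1)

theorem transferWeight_swap (u v : α) (w : α → ℝ) :
    transferWeight v u w = w + (-w u) • (Pi.single u 1 - Pi.single v 1) := by
  rw [transferWeight, neg_smul, ← smul_neg, neg_sub]

theorem transferWeight_apply_right {u v : α} (huv : u ≠ v) (w : α → ℝ) :
    transferWeight u v w v = 0 := by
  simp [transferWeight, huv.symm]

theorem transferWeight_mem_stdSimplex [Fintype α] {w : α → ℝ} (hw : w ∈ stdSimplex ℝ α) (u v : α) :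
    transferWeight u v w ∈ stdSimplex ℝ α := by
  constructor
  · intro i
    have hu : 0 ≤ w v * (Pi.single u 1 : α → ℝ) i :=
      mul_nonneg (hw.1 v) ((single_mem_stdSimplex ℝ u).1 i)
    have hv : w v * (Pi.single v 1 : α → ℝ) i ≤ w i := by
      rcases eq_or_ne i v with rfl | hiv
      · simp
      · simpa [hiv] using hw.1 i
    simp only [transferWeight, Pi.add_apply, Pi.smul_apply, Pi.sub_apply, smul_eq_mul, mul_sub]
    linarith
  · simp [transferWeight, Finset.sum_add_distrib, ← Finset.mul_sum, hw.2]

theorem lagrangianPoly_le_max_transferWeight {G : Finset (Finset α)} {u v : α}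
    (hG : ∀ e ∈ G, ¬(u ∈ e ∧ v ∈ e)) {w : α → ℝ} (hw : 0 ≤ w) :
    lagrangianPoly G w ≤
      max (lagrangianPoly G (transferWeight u v w)) (lagrangianPoly G (transferWeight v u w)) := by
  set d : α → ℝ := Pi.single u 1 - Pi.single v 1
  have hsupp : ∀ i, d i ≠ 0 → i = u ∨ i = v := fun i ↦ by
    contrapose!
    rintro ⟨hu, hv⟩
    simp [d, hu, hv]
  have hd : ∀ e ∈ G, ((e : Set α) ∩ Function.support d).Subsingleton := by
    rintro e he i ⟨hie, hi⟩ j ⟨hje, hj⟩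
    rcases hsupp i hi with rfl | rfl <;> rcases hsupp j hj with rfl | rfl
    exacts [rfl, (hG e he ⟨hie, hje⟩).elim, (hG e he ⟨hje, hie⟩).elim, rfl]
  obtain ⟨b, hb⟩ := exists_forall_lagrangianPoly_add_smul_eq hd w
  rw [transferWeight_swap u v, transferWeight, hb, hb, le_max_iff]
  rcases le_total 0 b with hb₀ | hb₀
  · exact .inl (le_add_of_nonneg_right (mul_nonneg (hw v) hb₀))
  · exact .inr (le_add_of_nonneg_right (mul_nonneg_of_nonpos_of_nonpos (neg_nonpos.2 (hw u)) hb₀))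

end Transfer

section Lagrangian

variable [Fintype α]

theorem lagrangian_eq_sSup_image (G : Finset (Finset α)) :
    lagrangian G = sSup (lagrangianPoly G '' stdSimplex ℝ α) := by
  simp only [lagrangian, lagrangianPoly, stdSimplex, Set.image, Set.mem_ofPred_eq, and_assoc,
    eq_comm]

theorem lagrangianPoly_le_lagrangian (G : Finset (Finset α)) {w : α → ℝ}
    (hw : w ∈ stdSimplex ℝ α) : lagrangianPoly G w ≤ lagrangian G := by
  rw [lagrangian_eq_sSup_image]
  exact le_csSup ((isCompact_stdSimplex ℝ α).bddAbove_image
    (continuous_lagrangianPoly G).continuousOn) (Set.mem_image_of_mem _ hw)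

theorem lagrangian_le [Nonempty α] {G : Finset (Finset α)} {c : ℝ}
    (h : ∀ w ∈ stdSimplex ℝ α, lagrangianPoly G w ≤ c) : lagrangian G ≤ c := by
  classical
  rw [lagrangian_eq_sSup_image]
  exact csSup_le (.image _ ⟨_, single_mem_stdSimplex ℝ (Classical.arbitrary α)⟩)
    (Set.forall_mem_image.2 h)

variable [DecidableEq α] {u v : α}

theorem lagrangianPoly_transferWeight_le (G : Finset (Finset α)) (huv : u ≠ v) {w : α → ℝ}
    (hw : w ∈ stdSimplex ℝ α) :
    lagrangianPoly G (transferWeight u v w) ≤ lagrangian (G.nonMemberSubfamily v) := by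
  rw [← lagrangianPoly_nonMemberSubfamily (transferWeight_apply_right huv w)]
  exact lagrangianPoly_le_lagrangian _ (transferWeight_mem_stdSimplex hw u v)

theorem lagrangian_le_max_nonMemberSubfamily {G : Finset (Finset α)} (huv : u ≠ v)
    (hG : ∀ e ∈ G, ¬(u ∈ e ∧ v ∈ e)) :
    lagrangian G ≤
      max (lagrangian (G.nonMemberSubfamily v)) (lagrangian (G.nonMemberSubfamily u)) :=
  have : Nonempty α := ⟨u⟩
  lagrangian_le fun _ hw ↦ (lagrangianPoly_le_max_transferWeight hG hw.1).trans <|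
    max_le_max (lagrangianPoly_transferWeight_le G huv hw)
      (lagrangianPoly_transferWeight_le G huv.symm hw)

theorem dense_covers_pairs_general {G : Finset (Finset α)} (huv : u ≠ v)
    (hu : lagrangian (G.nonMemberSubfamily u) < lagrangian G)
    (hv : lagrangian (G.nonMemberSubfamily v) < lagrangian G) : ∃ e ∈ G, u ∈ e ∧ v ∈ e := by
  by_contra! hG
  exact (max_lt hv hu).not_ge
    (lagrangian_le_max_nonMemberSubfamily huv fun e he h ↦ hG e he h.1 h.2)

end Lagrangian

end

/-- **Lemma (Frankl–Füredi, Sidorenko).**  Every dense `r`-graph covers pairs: if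
`λ(G') < λ(G)` for every proper subgraph `G'` of `G`, then every pair of distinct vertices
of `G` (vertices lying in some edge) is contained in a common edge of `G`. -/
theorem dense_covers_pairs {α : Type*} [Fintype α]
    (r : ℕ) (G : Finset (Finset α)) (hG : IsRGraph r G)
    (hdense : ∀ G' : Finset (Finset α), G' ⊂ G → lagrangian G' < lagrangian G)
    (u v : α) (hu : ∃ e ∈ G, u ∈ e) (hv : ∃ e ∈ G, v ∈ e) (huv : u ≠ v) :
    ∃ e ∈ G, u ∈ e ∧ v ∈ e := by
  classical
  exact dense_covers_pairs_general huv (hdense _ (nonMemberSubfamily_ssubset hu))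
    (hdense _ (nonMemberSubfamily_ssubset hv))
end

section
/- Let F be an r-graph. Then π(F) = sup{ r!·λ(G) : G is an F-hom-free r-graph }; that is, the sequence ex(n,F)/C(n,r) converges as n → ∞ and its limit equals the supremum of r!·λ(G) over all r-graphs G admitting no homomorphism from F. -/
open Finset

/-!
Let `s` be the supremum. If `G` is `F`-hom-free and `φ : Fin n → V(G)` is random, with independent
values distributed according to an optimal weighting of `G`, then the pull-back of `G` along `φ` is
`F`-free and has `C(n,r) · r! λ(G)` edges on average. Hence `s ≤ ex(n,F) / C(n,r)` for all `n ≥ r`.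

Conversely, let `G` be an `r`-graph on `n` vertices of density more than `s + ε`. Choose `m` large.
On average over `ψ : Fin m → Fin n`, the pull-back of `G` along `ψ` is about as dense as `G`, while
an `F`-hom-free pull-back has density at most `s`. So for a positive proportion of the `ψ` there is
a homomorphism from `F` to the pull-back, and some fixed `f : V(F) → Fin m` works for a positive
proportion of them. These `ψ` form a dense set of `m`-tuples, which contains a large box with
distinct entries when `n` is large: a blow-up of the image of `f`, and in it an injective copy
of `F`.
-/

open scoped BigOperators

section RandomMaps

variable {ι V R : Type*} [CommSemiring R] {w : V → R}

lemma sum_prod_apply_eq_one [Fintype ι] [DecidableEq ι] [Fintype V] (hw : ∑ v, w v = 1) :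
    ∑ φ : ι → V, ∏ i, w (φ i) = 1 := by
  rw [← Fintype.piFinset_univ, sum_prod_piFinset univ fun _ ↦ w]
  exact prod_eq_one fun _ _ ↦ hw

lemma sum_prod_apply_filter_extending [Fintype ι] [DecidableEq ι] [Fintype V] [DecidableEq V]
    (hw : ∑ v, w v = 1) (e : Finset ι) (σ : e → V) :
    ∑ φ : ι → V with ∀ i : e, φ i = σ i, ∏ i, w (φ i) = ∏ i, w (σ i) := by
  let t (i : ι) : Finset V := if hi : i ∈ e then {σ ⟨i, hi⟩} else univ
  have filter_eq_piFinset :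
      ({φ : ι → V | ∀ i : e, φ i = σ i} : Finset (ι → V)) = Fintype.piFinset t := by
    ext φ
    rw [mem_filter_univ, Fintype.mem_piFinset]
    refine ⟨fun h i ↦ ?_, fun h i ↦ by simpa [t] using h i⟩
    by_cases hi : i ∈ e
    · simpa [t, hi] using h ⟨i, hi⟩
    · simp [t, hi]
  rw [filter_eq_piFinset, ← prod_univ_sum t fun _ ↦ w, ← prod_subset (subset_univ e),
    ← prod_coe_sort]
  · exact prod_congr rfl fun i _ ↦ by simp [t]
  · intro i _ hi
    simp [t, hi, hw]

lemma card_filter_equiv_extended_by [DecidableEq ι] [DecidableEq V] {e : Finset ι} {g : Finset V}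
    (h : #e = #g) (φ : ι → V) :
    #{σ : e ≃ g | ∀ i : e, φ i = σ i} = if e.image φ = g then 1 else 0 := by
  split_ifs with hφ
  · have hinj : Set.InjOn φ e := card_image_iff.1 (hφ ▸ h.symm)
    let σ₀ : e ≃ g := Set.BijOn.equiv φ ⟨fun i hi ↦ hφ ▸ mem_image_of_mem φ hi, hinj,
      fun v hv ↦ by rw [← coe_image, hφ]; exact hv⟩
    rw [card_eq_one]
    refine ⟨σ₀, ?_⟩
    ext σ
    simp only [mem_filter_univ, mem_singleton, Equiv.ext_iff, Subtype.ext_iff]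
    exact forall_congr' fun i ↦ eq_comm
  · rw [card_eq_zero, filter_eq_empty_iff]
    intro σ _ hσ
    apply hφ
    ext v
    refine ⟨fun hv ↦ ?_, fun hv ↦ ?_⟩
    · obtain ⟨i, hi, rfl⟩ := mem_image.1 hv
      exact hσ ⟨i, hi⟩ ▸ (σ _).2
    · exact mem_image.2 ⟨σ.symm ⟨v, hv⟩, (σ.symm _).2, by rw [hσ, Equiv.apply_symm_apply]⟩

lemma sum_prod_apply_filter_image_eq [Fintype ι] [DecidableEq ι] [Fintype V] [DecidableEq V]
    (hw : ∑ v, w v = 1) {e : Finset ι} {g : Finset V} (h : #e = #g) :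
    ∑ φ : ι → V with e.image φ = g, ∏ i, w (φ i) = (#g).factorial * ∏ v ∈ g, w v :=
  calc
    ∑ φ : ι → V with e.image φ = g, ∏ i, w (φ i)
      = ∑ φ : ι → V, ∑ σ : e ≃ g with ∀ i : e, φ i = (σ i : V), ∏ i, w (φ i) := by
        simp_rw [sum_const, card_filter_equiv_extended_by h, ite_smul, one_smul, zero_smul,
          sum_filter]
    _ = ∑ σ : e ≃ g, ∑ φ : ι → V with ∀ i : e, φ i = (σ i : V), ∏ i, w (φ i) :=
        sum_comm' (by simp only [mem_univ, mem_filter_univ, and_true, true_and, implies_true])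
    _ = ∑ _σ : e ≃ g, ∏ v ∈ g, w v := sum_congr rfl fun σ _ ↦ by
        rw [sum_prod_apply_filter_extending hw e (fun i ↦ (σ i : V)), ← prod_coe_sort g]
        exact Equiv.prod_comp σ fun v ↦ w v
    _ = (#g).factorial * ∏ v ∈ g, w v := by
        rw [sum_const, card_univ, Fintype.card_equiv (equivOfCardEq h), Fintype.card_coe, h,
          nsmul_eq_mul]

end RandomMaps

section Lagrangian

variable {V : Type*}

/-- The Lagrangian polynomial `p_G` of a hypergraph: the generating polynomial of its edges. -/
def edgePolynomial (G : Finset (Finset V)) (w : V → ℝ) : ℝ :=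
  ∑ e ∈ G, ∏ i ∈ e, w i

variable [Fintype V]

lemma const_inv_card_mem_stdSimplex [Nonempty V] :
    (fun _ ↦ (Fintype.card V : ℝ)⁻¹) ∈ stdSimplex ℝ V :=
  ⟨fun _ ↦ by positivity, by
    rw [sum_const, card_univ, nsmul_eq_mul,
      mul_inv_cancel₀ (Nat.cast_ne_zero.2 Fintype.card_ne_zero)]⟩

lemma edgePolynomial_le_card {G : Finset (Finset V)} {w : V → ℝ} (hw : w ∈ stdSimplex ℝ V) :
    edgePolynomial G w ≤ #G := by
  rw [edgePolynomial, ← nsmul_one, ← sum_const]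
  exact sum_le_sum fun e _ ↦ prod_le_one (fun i _ ↦ hw.1 i) fun i _ ↦
    (single_le_sum (fun j _ ↦ hw.1 j) (mem_univ i)).trans_eq hw.2

lemma edgePolynomial_le_lagrangian {G : Finset (Finset V)} {w : V → ℝ}
    (hw : w ∈ stdSimplex ℝ V) : edgePolynomial G w ≤ lagrangian G := by
  refine le_csSup ⟨#G, ?_⟩ ⟨w, hw.1, hw.2, rfl⟩
  rintro _ ⟨u, hu₀, hu₁, rfl⟩
  exact edgePolynomial_le_card ⟨hu₀, hu₁⟩

lemma mul_lagrangian_le {G : Finset (Finset V)} {a b : ℝ} (ha : 0 ≤ a) (hb : 0 ≤ b)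
    (h : ∀ w ∈ stdSimplex ℝ V, a * edgePolynomial G w ≤ b) : a * lagrangian G ≤ b := by
  rcases ha.eq_or_lt with rfl | ha
  · rwa [zero_mul]
  · rw [← le_div_iff₀' ha]
    refine Real.sSup_le ?_ (by positivity)
    rintro _ ⟨w, hw₀, hw₁, rfl⟩
    exact (le_div_iff₀' ha).2 (h w ⟨hw₀, hw₁⟩)

lemma lagrangian_nonneg (G : Finset (Finset V)) : 0 ≤ lagrangian G := by
  refine Real.sSup_nonneg ?_
  rintro _ ⟨w, hw, -, rfl⟩
  exact sum_nonneg fun e _ ↦ prod_nonneg fun i _ ↦ hw i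

end Lagrangian

section Pullback

variable {α ι V : Type*} [Fintype ι] [DecidableEq V] {r : ℕ} {F : Finset (Finset α)}
  {G : Finset (Finset V)}

lemma IsRGraph.card_le_choose {H : Finset (Finset ι)} (hH : IsRGraph r H) :
    #H ≤ (Fintype.card ι).choose r :=
  Set.Sized.card_le fun _ he ↦ hH _ he

/-- The pull-back along `φ` of an `r`-graph `G`: the `r`-graph of those `r`-sets that `φ` maps
onto an edge of `G`. It is the part of the blow-up of `G` sampled by `φ`. -/
def pullback (r : ℕ) (G : Finset (Finset V)) (φ : ι → V) : Finset (Finset ι) :=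
  {e ∈ univ.powersetCard r | e.image φ ∈ G}

lemma mem_pullback {φ : ι → V} {e : Finset ι} :
    e ∈ pullback r G φ ↔ #e = r ∧ e.image φ ∈ G := by
  rw [pullback, mem_filter, mem_powersetCard_univ]

lemma isRGraph_pullback (φ : ι → V) : IsRGraph r (pullback r G φ) :=
  fun _ he ↦ (mem_pullback.1 he).1

lemma ContainsHom.of_pullback [DecidableEq ι] {φ : ι → V} (h : ContainsHom F (pullback r G φ)) :
    ContainsHom F G := by
  obtain ⟨f, hf⟩ := h
  refine ⟨φ ∘ f, fun e he ↦ ?_⟩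
  rw [← image_image]
  exact (mem_pullback.1 (hf e he)).2

lemma ContainsCopy.containsHom (h : ContainsCopy F G) : ContainsHom F G :=
  h.imp fun _ ↦ And.right

variable [Fintype V]

lemma sum_prod_apply_mul_card_pullback [DecidableEq ι] (hG : IsRGraph r G) {w : V → ℝ}
    (hw : ∑ v, w v = 1) :
    ∑ φ : ι → V, (∏ i, w (φ i)) * #(pullback r G φ) =
      (Fintype.card ι).choose r * (r.factorial * edgePolynomial G w) :=
  calc
    ∑ φ : ι → V, (∏ i, w (φ i)) * #(pullback r G φ)
      = ∑ φ : ι → V, ∑ e ∈ univ.powersetCard r, ∑ g ∈ G,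
          if e.image φ = g then ∏ i, w (φ i) else 0 := by
        simp_rw [pullback, sum_ite_eq, ← sum_filter, sum_const, nsmul_eq_mul, mul_comm]
    _ = ∑ e ∈ univ.powersetCard r, ∑ g ∈ G,
          ∑ φ : ι → V with e.image φ = g, ∏ i, w (φ i) := by
        simp_rw [sum_filter]
        rw [sum_comm]
        exact sum_congr rfl fun e _ ↦ sum_comm
    _ = ∑ _e ∈ (univ : Finset ι).powersetCard r, ∑ g ∈ G, r.factorial * ∏ v ∈ g, w v :=
        sum_congr rfl fun e he ↦ sum_congr rfl fun g hg ↦ by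
          rw [sum_prod_apply_filter_image_eq hw
            ((mem_powersetCard_univ.1 he).trans (hG g hg).symm), hG g hg]
    _ = (Fintype.card ι).choose r * (r.factorial * edgePolynomial G w) := by
        rw [sum_const, card_powersetCard, card_univ, nsmul_eq_mul, edgePolynomial, ← mul_sum]

lemma exists_choose_mul_edgePolynomial_le_card_pullback (ι : Type*) [Fintype ι]
    (hG : IsRGraph r G) {w : V → ℝ} (hw : w ∈ stdSimplex ℝ V) :
    ∃ φ : ι → V,
      (Fintype.card ι).choose r * (r.factorial * edgePolynomial G w) ≤ #(pullback r G φ) := by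
  classical
  by_contra! hlt
  have weights_nonneg (φ : ι → V) : 0 ≤ ∏ i, w (φ i) := prod_nonneg fun i _ ↦ hw.1 (φ i)
  have total := sum_prod_apply_eq_one (ι := ι) hw.2
  obtain ⟨φ, -, hφ⟩ : ∃ φ ∈ (univ : Finset (ι → V)), 0 < ∏ i, w (φ i) :=
    exists_lt_of_sum_lt (by simp [total])
  have average_lt := sum_lt_sum (s := univ)
    (fun φ _ ↦ mul_le_mul_of_nonneg_left (hlt φ).le (weights_nonneg φ))
    ⟨φ, mem_univ φ, mul_lt_mul_of_pos_left (hlt φ) hφ⟩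
  rw [sum_prod_apply_mul_card_pullback hG hw.2, ← sum_mul, total, one_mul] at average_lt
  exact average_lt.false

end Pullback

section TuranNumber

variable {α : Type*} {r n : ℕ} {F : Finset (Finset α)}

lemma card_le_exNum {G : Finset (Finset (Fin n))} (hG : IsRGraph r G) (hF : ¬ ContainsCopy F G) :
    #G ≤ exNum r n F := by
  refine le_csSup ⟨n.choose r, ?_⟩ ⟨G, hG, hF, rfl⟩
  rintro _ ⟨H, hH, -, rfl⟩
  exact hH.card_le_choose.trans_eq (by rw [Fintype.card_fin])

lemma exNum_le {b : ℝ} (hb : 0 ≤ b)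
    (h : ∀ G : Finset (Finset (Fin n)), IsRGraph r G → ¬ ContainsCopy F G → (#G : ℝ) ≤ b) :
    (exNum r n F : ℝ) ≤ b := by
  refine (Nat.cast_le.2 (csSup_le' ?_)).trans (Nat.floor_le hb)
  rintro _ ⟨G, hG, hF, rfl⟩
  exact Nat.le_floor (h G hG hF)

/-- The scaled Lagrangians `r! λ(G)` of the `F`-hom-free `r`-graphs `G`. Vertex sets `Fin k`
suffice, since only the isomorphism type of `G` matters. -/
def scaledLagrangians (r : ℕ) (F : Finset (Finset α)) : Set ℝ :=
  {x | ∃ (k : ℕ) (G : Finset (Finset (Fin k))),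
    IsRGraph r G ∧ ¬ ContainsHom F G ∧ x = (r.factorial : ℝ) * lagrangian G}

lemma factorial_mul_edgePolynomial_le_one {V : Type*} [Fintype V] {G : Finset (Finset V)}
    (hG : IsRGraph r G) {w : V → ℝ} (hw : w ∈ stdSimplex ℝ V) :
    r.factorial * edgePolynomial G w ≤ 1 := by
  classical
  obtain ⟨φ, hφ⟩ := exists_choose_mul_edgePolynomial_le_card_pullback (Fin r) hG hw
  have card_pullback_le := (isRGraph_pullback (r := r) (G := G) φ).card_le_choose
  rw [Fintype.card_fin, Nat.choose_self] at hφ card_pullback_le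
  rw [Nat.cast_one, one_mul] at hφ
  exact hφ.trans (mod_cast card_pullback_le)

lemma bddAbove_scaledLagrangians : BddAbove (scaledLagrangians r F) := by
  refine ⟨1, ?_⟩
  rintro _ ⟨k, G, hG, -, rfl⟩
  exact mul_lagrangian_le (by positivity) zero_le_one fun w hw ↦
    factorial_mul_edgePolynomial_le_one hG hw

lemma sSup_scaledLagrangians_nonneg : 0 ≤ sSup (scaledLagrangians r F) := by
  refine Real.sSup_nonneg ?_
  rintro _ ⟨k, G, -, -, rfl⟩
  exact mul_nonneg (by positivity) (lagrangian_nonneg G)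

lemma sSup_scaledLagrangians_le_exNum_div_choose (hrn : r ≤ n) :
    sSup (scaledLagrangians r F) ≤ exNum r n F / n.choose r := by
  refine Real.sSup_le ?_ (by positivity)
  rintro _ ⟨k, G, hG, hF, rfl⟩
  refine mul_lagrangian_le (by positivity) (by positivity) fun w hw ↦ ?_
  obtain ⟨φ, hφ⟩ := exists_choose_mul_edgePolynomial_le_card_pullback (Fin n) hG hw
  have card_pullback_le : #(pullback r G φ) ≤ exNum r n F :=
    card_le_exNum (isRGraph_pullback φ) fun h ↦ hF h.containsHom.of_pullback
  rw [Fintype.card_fin] at hφ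
  rw [le_div_iff₀' (mod_cast Nat.choose_pos hrn)]
  exact hφ.trans (mod_cast card_pullback_le)

end TuranNumber

section BoxNorm

variable {V τ : Type*} [Fintype V]

lemma expect_pow_le_expect_pow [Nonempty V] {f : V → ℝ} (hf : ∀ v, 0 ≤ f v) (k : ℕ) :
    (𝔼 v, f v) ^ k ≤ 𝔼 v, f v ^ k := by
  simpa only [Fintype.expect_eq_sum_div_card, div_eq_inv_mul, mul_sum] using
    Real.pow_arith_mean_le_arith_mean_pow univ (fun _ ↦ (Fintype.card V : ℝ)⁻¹) f
      (fun _ _ ↦ by positivity) const_inv_card_mem_stdSimplex.2 (fun v _ ↦ hf v) k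

lemma expect_fin_succ {m : ℕ} (f : (Fin (m + 1) → V) → ℝ) :
    𝔼 x, f x = 𝔼 v, 𝔼 y, f (Fin.cons v y) := by
  rw [← expect_product', univ_product_univ]
  exact (Fintype.expect_equiv (Fin.consEquiv fun _ ↦ V) _ f fun _ ↦ rfl).symm

lemma prod_fin_succ {m : ℕ} (f : (Fin (m + 1) → V) → ℝ) :
    ∏ x, f x = ∏ v, ∏ y, f (Fin.cons v y) := by
  rw [← prod_product', univ_product_univ]
  exact (Fintype.prod_equiv (Fin.consEquiv fun _ ↦ V) _ f fun _ ↦ rfl).symm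

variable [Fintype τ] [DecidableEq τ]

lemma expect_pow_card (f : V → ℝ) :
    (𝔼 v, f v) ^ Fintype.card τ = 𝔼 x : τ → V, ∏ j, f (x j) := by
  rw [Fintype.expect_eq_sum_div_card, Fintype.expect_eq_sum_div_card, div_pow, Fintype.card_fun,
    Nat.cast_pow, ← Fintype.piFinset_univ, sum_prod_piFinset univ fun _ ↦ f, prod_const, card_univ]

/-- Convexity of the power function, applied to one coordinate of the box at a time. -/
lemma expect_pow_card_pow_le_expect_prod [Nonempty V] {m : ℕ} {g : (Fin m → V) → ℝ}
    (hg : ∀ x, 0 ≤ g x) :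
    (𝔼 x, g x) ^ Fintype.card τ ^ m ≤
      𝔼 a : Fin m → τ → V, ∏ c : Fin m → τ, g fun i ↦ a i (c i) := by
  induction m with
  | zero => simp [Subsingleton.elim _ (default : Fin 0 → V)]
  | succ m ih =>
    have first_coordinate : (𝔼 x, g x) ^ Fintype.card τ ≤
        𝔼 b : τ → V, 𝔼 y : Fin m → V, ∏ j, g (Fin.cons (b j) y) := by
      rw [expect_fin_succ, expect_comm, expect_comm (univ : Finset (τ → V))]
      refine (expect_pow_le_expect_pow (fun y ↦ expect_nonneg fun v _ ↦ hg _) _).trans_eq ?_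
      simp_rw [expect_pow_card]
    calc
      (𝔼 x, g x) ^ Fintype.card τ ^ (m + 1)
        = ((𝔼 x, g x) ^ Fintype.card τ) ^ Fintype.card τ ^ m := by rw [← pow_mul, pow_succ']
      _ ≤ (𝔼 b : τ → V, 𝔼 y : Fin m → V, ∏ j, g (Fin.cons (b j) y)) ^ Fintype.card τ ^ m :=
          pow_le_pow_left₀ (pow_nonneg (expect_nonneg fun x _ ↦ hg x) _) first_coordinate _
      _ ≤ 𝔼 b : τ → V, (𝔼 y : Fin m → V, ∏ j, g (Fin.cons (b j) y)) ^ Fintype.card τ ^ m :=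
          expect_pow_le_expect_pow
            (fun b ↦ expect_nonneg fun y _ ↦ prod_nonneg fun j _ ↦ hg _) _
      _ ≤ 𝔼 b : τ → V, 𝔼 a : Fin m → τ → V, ∏ d : Fin m → τ, ∏ j,
            g (Fin.cons (b j) fun i ↦ a i (d i)) :=
          expect_le_expect fun b _ ↦ ih fun y ↦ prod_nonneg fun j _ ↦ hg _
      _ = 𝔼 a : Fin (m + 1) → τ → V, ∏ c : Fin (m + 1) → τ, g fun i ↦ a i (c i) := by
          rw [expect_fin_succ]
          refine expect_congr rfl fun b _ ↦ expect_congr rfl fun a _ ↦ ?_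
          rw [prod_fin_succ, prod_comm]
          refine prod_congr rfl fun j _ ↦ prod_congr rfl fun d _ ↦ congrArg g ?_
          ext i
          cases i using Fin.cases <;> rfl

lemma dens_pow_card_pow_le_dens_box [Nonempty V] [DecidableEq V] {m : ℕ}
    (A : Finset (Fin m → V)) :
    (A.dens : ℝ) ^ Fintype.card τ ^ m ≤
      ({a | ∀ c : Fin m → τ, (fun i ↦ a i (c i)) ∈ A} : Finset (Fin m → τ → V)).dens := by
  have box := expect_pow_card_pow_le_expect_prod (τ := τ) (m := m)
    (g := (A : Set (Fin m → V)).indicator 1) (Set.indicator_nonneg fun _ _ ↦ zero_le_one)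
  rw [← expect_indicator_one, ← expect_indicator_one]
  refine box.trans_eq (expect_congr rfl fun a _ ↦ ?_)
  simp [Set.indicator_apply, prod_ite_zero]

end BoxNorm

section Box

open Filter Topology

lemma tendsto_descFactorial_div_pow (k : ℕ) :
    Tendsto (fun n : ℕ ↦ (n.descFactorial k : ℝ) / n ^ k) atTop (𝓝 1) := by
  refine (Asymptotics.isEquivalent_iff_tendsto_one ?_).1 (isEquivalent_descFactorial k)
  filter_upwards [eventually_ne_atTop 0] with n hn
  positivity

lemma card_filter_injective2 {V κ τ : Type*} [Fintype V] [Fintype κ] [DecidableEq κ] [Fintype τ]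
    [DecidableEq τ] [DecidablePred fun a : κ → τ → V ↦ Function.Injective2 a] :
    #{a : κ → τ → V | Function.Injective2 a} =
      (Fintype.card V).descFactorial (Fintype.card κ * Fintype.card τ) := by
  let e : {a : κ → τ → V // Function.Injective2 a} ≃ (κ × τ ↪ V) :=
    ((Equiv.curry κ τ V).symm.subtypeEquiv fun a ↦ ⟨Function.Injective2.uncurry, fun h i x j y hxy ↦
      Prod.ext_iff.1 (@h (i, j) (x, y) hxy)⟩).trans (Equiv.subtypeInjectiveEquivEmbedding _ _)
  classical
  rw [← Fintype.card_subtype, Fintype.card_congr e, Fintype.card_embedding_eq, Fintype.card_prod]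

/-- Erdős' theorem on complete `m`-partite subgraphs of dense `m`-partite `m`-graphs. -/
lemma eventually_exists_injective2_box (τ : Type*) [Finite τ] (m : ℕ) {δ : ℝ} (hδ : 0 < δ) :
    ∀ᶠ n in atTop, ∀ A : Finset (Fin m → Fin n), δ ≤ A.dens →
      ∃ a : Fin m → τ → Fin n, Function.Injective2 a ∧
        ∀ c : Fin m → τ, (fun i ↦ a i (c i)) ∈ A := by
  classical
  cases nonempty_fintype τ
  have hbox : 0 < δ ^ Fintype.card τ ^ m := by positivity
  filter_upwards [eventually_ne_atTop 0, (tendsto_descFactorial_div_pow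
    (m * Fintype.card τ)).eventually_const_lt (sub_lt_self 1 hbox)] with n hn hinj A hA
  have : NeZero n := ⟨hn⟩
  let boxes : Finset (Fin m → τ → Fin n) := {a | ∀ c : Fin m → τ, (fun i ↦ a i (c i)) ∈ A}
  let injections : Finset (Fin m → τ → Fin n) := {a | Function.Injective2 a}
  have dens_boxes : δ ^ Fintype.card τ ^ m ≤ boxes.dens :=
    (pow_le_pow_left₀ hδ.le hA _).trans (dens_pow_card_pow_le_dens_box A)
  have dens_injections : 1 - δ ^ Fintype.card τ ^ m < injections.dens := by
    rwa [nnratCast_dens, card_filter_injective2, Fintype.card_fun, Fintype.card_fun,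
      Fintype.card_fin, Fintype.card_fin, Nat.cast_pow, Nat.cast_pow, ← pow_mul, mul_comm _ m]
  have overlap : (boxes ∩ injections).Nonempty := by
    rw [← dens_pos, ← NNRat.cast_pos (K := ℝ)]
    have inclusion_exclusion : ((boxes ∪ injections).dens + (boxes ∩ injections).dens : ℝ) =
        boxes.dens + injections.dens := mod_cast dens_union_add_dens_inter boxes injections
    have dens_union_le_one : ((boxes ∪ injections).dens : ℝ) ≤ 1 := mod_cast dens_le_one
    linarith
  obtain ⟨a, ha⟩ := overlap
  exact ⟨a, (mem_filter.1 (mem_inter.1 ha).2).2, (mem_filter.1 (mem_inter.1 ha).1).2⟩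

end Box

section EdgeDensity

variable {V : Type*} [Fintype V] {r : ℕ} {G : Finset (Finset V)}

/-- The probability that `r` independent uniformly random vertices form an edge of the `r`-graph
`G`. Unlike `#G / (card V).choose r` it does not change under blow-ups of `G`. -/
noncomputable def edgeDensity (r : ℕ) (G : Finset (Finset V)) : ℝ :=
  r.factorial * #G / (Fintype.card V : ℝ) ^ r

lemma factorial_mul_edgePolynomial_const_inv_card (hG : IsRGraph r G) :
    r.factorial * edgePolynomial G (fun _ ↦ (Fintype.card V : ℝ)⁻¹) = edgeDensity r G := by
  rw [edgePolynomial, sum_congr rfl fun e he ↦ by rw [prod_const, hG e he], sum_const,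
    nsmul_eq_mul, inv_pow, ← mul_assoc, ← div_eq_mul_inv, edgeDensity]

lemma edgeDensity_le_one [Nonempty V] (hG : IsRGraph r G) : edgeDensity r G ≤ 1 :=
  factorial_mul_edgePolynomial_const_inv_card hG ▸
    factorial_mul_edgePolynomial_le_one hG const_inv_card_mem_stdSimplex

lemma edgeDensity_le_factorial_mul_lagrangian [Nonempty V] (hG : IsRGraph r G) :
    edgeDensity r G ≤ r.factorial * lagrangian G :=
  factorial_mul_edgePolynomial_const_inv_card hG ▸
    mul_le_mul_of_nonneg_left (edgePolynomial_le_lagrangian const_inv_card_mem_stdSimplex)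
      (Nat.cast_nonneg _)

lemma expect_edgeDensity_pullback {ι : Type*} [Fintype ι] [DecidableEq ι] [Nonempty V]
    [DecidableEq V] (hG : IsRGraph r G) :
    𝔼 ψ : ι → V, edgeDensity r (pullback r G ψ) =
      (Fintype.card ι).descFactorial r / (Fintype.card ι : ℝ) ^ r * edgeDensity r G := by
  have average := sum_prod_apply_mul_card_pullback (ι := ι) hG const_inv_card_mem_stdSimplex.2
  rw [factorial_mul_edgePolynomial_const_inv_card hG, prod_const, card_univ, ← mul_sum] at average
  simp_rw [edgeDensity, ← expect_div, ← mul_expect]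
  rw [Fintype.expect_eq_sum_div_card, Fintype.card_fun, Nat.cast_pow, div_eq_inv_mul (∑ _, _),
    ← inv_pow, average, Nat.descFactorial_eq_factorial_mul_choose, edgeDensity]
  push_cast
  ring

lemma card_div_choose_le (hG : IsRGraph r G) (hr : r ≤ Fintype.card V) :
    (#G : ℝ) / (Fintype.card V).choose r ≤ edgeDensity r G +
      (1 - (Fintype.card V).descFactorial r / (Fintype.card V : ℝ) ^ r) := by
  set x : ℝ := #G / (Fintype.card V).choose r
  set y : ℝ := (Fintype.card V).descFactorial r / (Fintype.card V : ℝ) ^ r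
  have choose_pos : (0 : ℝ) < (Fintype.card V).choose r := mod_cast Nat.choose_pos hr
  have x_le_one : x ≤ 1 := div_le_one_of_le₀ (mod_cast hG.card_le_choose) choose_pos.le
  have y_le_one : y ≤ 1 :=
    div_le_one_of_le₀ (mod_cast Nat.descFactorial_le_pow _ _) (by positivity)
  have edgeDensity_eq : edgeDensity r G = x * y := by
    simp only [x, y, edgeDensity, Nat.descFactorial_eq_factorial_mul_choose, Nat.cast_mul]
    field_simp
  rw [edgeDensity_eq]
  linarith [mul_nonneg (sub_nonneg.2 x_le_one) (sub_nonneg.2 y_le_one)]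

end EdgeDensity

section Homomorphisms

variable {α ι V : Type*} [DecidableEq V] {r : ℕ} {F : Finset (Finset α)} {G : Finset (Finset V)}

/-- `f` is a homomorphism from `F` to `G`; thus `ContainsHom F G` says that some `f` is one. -/
def IsHom (F : Finset (Finset α)) (G : Finset (Finset V)) (f : α → V) : Prop :=
  ∀ e ∈ F, e.image f ∈ G

instance : DecidablePred (IsHom F G) :=
  fun f ↦ inferInstanceAs (Decidable (∀ e ∈ F, e.image f ∈ G))

lemma IsHom.injOn {f : α → V} (hf : IsHom F G f) (hF : IsRGraph r F) (hG : IsRGraph r G)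
    {e : Finset α} (he : e ∈ F) : Set.InjOn f e :=
  card_image_iff.1 ((hG _ (hf e he)).trans (hF e he).symm)

-- The extra element `none` of `Option α` serves as the choice at the indices not in `e.image f`.
lemma containsCopy_of_forall_isHom (hF : IsRGraph r F) (hG : IsRGraph r G) (f : α → ι)
    {a : ι → Option α → V} (ha : Function.Injective2 a)
    (h : ∀ c : ι → Option α, IsHom F G fun v ↦ a (f v) (c (f v))) : ContainsCopy F G := by
  refine ⟨fun v ↦ a (f v) (some v), fun u v huv ↦ Option.some_injective _ (ha huv).2,
    fun e he ↦ ?_⟩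
  have f_injOn : Set.InjOn f e := fun u hu v hv huv ↦
    (h fun _ ↦ none).injOn hF hG he hu hv (congrArg (a · none) huv)
  let c : ι → Option α := Function.extend (fun v : e ↦ f v) (fun v ↦ some (v : α)) fun _ ↦ none
  have c_apply {v : α} (hv : v ∈ e) : c (f v) = some v :=
    f_injOn.injective.extend_apply _ _ (⟨v, hv⟩ : e)
  have image_eq : e.image (fun v ↦ a (f v) (some v)) = e.image fun v ↦ a (f v) (c (f v)) :=
    image_congr fun v hv ↦ congrArg (a (f v)) (c_apply hv).symm
  exact image_eq ▸ h c e he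

end Homomorphisms

section UpperBound

open Filter Topology

variable {α : Type*} {r : ℕ} {F : Finset (Finset α)}

lemma edgeDensity_le_sSup_scaledLagrangians {m : ℕ} [NeZero m] {G : Finset (Finset (Fin m))}
    (hG : IsRGraph r G) (hF : ¬ ContainsHom F G) :
    edgeDensity r G ≤ sSup (scaledLagrangians r F) :=
  (edgeDensity_le_factorial_mul_lagrangian hG).trans
    (le_csSup bddAbove_scaledLagrangians ⟨m, G, hG, hF, rfl⟩)

lemma edgeDensity_le_add_sum_dens_isHom [Fintype α] [DecidableEq α] {V : Type*} [Fintype V]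
    [Nonempty V] [DecidableEq V] {G : Finset (Finset V)} (hG : IsRGraph r G) (m : ℕ) [NeZero m] :
    m.descFactorial r / (m : ℝ) ^ r * edgeDensity r G ≤ sSup (scaledLagrangians r F) +
      ∑ f : α → Fin m, (({ψ | IsHom F G (ψ ∘ f)} : Finset (Fin m → V)).dens : ℝ) := by
  let homs (f : α → Fin m) : Finset (Fin m → V) := {ψ | IsHom F G (ψ ∘ f)}
  let count (ψ : Fin m → V) : ℝ := ∑ f, (homs f : Set (Fin m → V)).indicator 1 ψ
  have indicator_nonneg (f : α → Fin m) (ψ : Fin m → V) :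
      (0 : ℝ) ≤ (homs f : Set (Fin m → V)).indicator 1 ψ :=
    Set.indicator_nonneg (fun _ _ ↦ zero_le_one) ψ
  have edgeDensity_pullback_le (ψ : Fin m → V) :
      edgeDensity r (pullback r G ψ) ≤ sSup (scaledLagrangians r F) + count ψ := by
    by_cases hψ : ContainsHom F (pullback r G ψ)
    · obtain ⟨f, hf⟩ := hψ
      have ψ_mem : ψ ∈ homs f := (mem_filter_univ ψ).2 fun e he ↦ by
        rw [← image_image]
        exact (mem_pullback.1 (hf e he)).2
      have one_le_count : 1 ≤ count ψ := by
        refine le_trans ?_ (single_le_sum (fun f _ ↦ indicator_nonneg f ψ) (mem_univ f))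
        rw [Set.indicator_of_mem (mem_coe.2 ψ_mem), Pi.one_apply]
      exact (edgeDensity_le_one (isRGraph_pullback ψ)).trans
        (one_le_count.trans (le_add_of_nonneg_left sSup_scaledLagrangians_nonneg))
    · exact (edgeDensity_le_sSup_scaledLagrangians (isRGraph_pullback ψ) hψ).trans
        (le_add_of_nonneg_right (sum_nonneg fun f _ ↦ indicator_nonneg f ψ))
  calc
    m.descFactorial r / (m : ℝ) ^ r * edgeDensity r G
      = 𝔼 ψ : Fin m → V, edgeDensity r (pullback r G ψ) := by
        rw [expect_edgeDensity_pullback hG, Fintype.card_fin]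
    _ ≤ 𝔼 ψ, (sSup (scaledLagrangians r F) + count ψ) :=
        expect_le_expect fun ψ _ ↦ edgeDensity_pullback_le ψ
    _ = sSup (scaledLagrangians r F) + ∑ f, ((homs f).dens : ℝ) := by
        rw [expect_add_distrib, expect_const univ_nonempty, expect_sum_comm]
        simp_rw [expect_indicator_one]

lemma eventually_edgeDensity_le [Finite α] (hF : IsRGraph r F) {ε : ℝ} (hε : 0 < ε) :
    ∀ᶠ n in atTop, ∀ G : Finset (Finset (Fin n)), IsRGraph r G → ¬ ContainsCopy F G →
      edgeDensity r G ≤ sSup (scaledLagrangians r F) + ε := by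
  classical
  cases nonempty_fintype α
  obtain ⟨m, hm, hm₀⟩ := (((tendsto_descFactorial_div_pow r).eventually_const_lt
    (sub_lt_self 1 (half_pos hε))).and (eventually_ne_atTop 0)).exists
  have : NeZero m := ⟨hm₀⟩
  have card_maps_pos : (0 : ℝ) < Fintype.card (α → Fin m) := mod_cast Fintype.card_pos
  filter_upwards [eventually_ne_atTop 0, eventually_exists_injective2_box (Option α) m
    (div_pos (half_pos hε) card_maps_pos)] with n hn₀ exists_box G hG hFG
  have : NeZero n := ⟨hn₀⟩
  by_contra! hlt
  have many_homs : ε / 2 ≤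
      ∑ f : α → Fin m, (({ψ | IsHom F G (ψ ∘ f)} : Finset (Fin m → Fin n)).dens : ℝ) := by
    have average_le := edgeDensity_le_add_sum_dens_isHom (F := F) hG m
    have edgeDensity_nonneg : 0 ≤ edgeDensity r G :=
      (add_nonneg sSup_scaledLagrangians_nonneg hε.le).trans hlt.le
    have loss_le : (1 - m.descFactorial r / (m : ℝ) ^ r) * edgeDensity r G ≤ ε / 2 :=
      (mul_le_mul_of_nonneg_right (by linarith) edgeDensity_nonneg).trans
        (mul_le_of_le_one_right (by positivity) (edgeDensity_le_one hG))
    linarith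
  obtain ⟨f, -, hf⟩ := exists_le_of_sum_le univ_nonempty (many_homs.trans' <| by
    rw [sum_const, card_univ, nsmul_eq_mul, mul_div_cancel₀ _ card_maps_pos.ne'])
  obtain ⟨a, ha, hom⟩ := exists_box _ hf
  exact hFG (containsCopy_of_forall_isHom hF hG f ha fun c ↦ (mem_filter.1 (hom c)).2)

lemma eventually_exNum_div_choose_le [Finite α] (hF : IsRGraph r F) {ε : ℝ} (hε : 0 < ε) :
    ∀ᶠ n in atTop, (exNum r n F : ℝ) / n.choose r ≤ sSup (scaledLagrangians r F) + ε := by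
  filter_upwards [eventually_edgeDensity_le hF (half_pos hε), eventually_ge_atTop r,
    (tendsto_descFactorial_div_pow r).eventually_const_lt (sub_lt_self 1 (half_pos hε))]
    with n edgeDensity_le hrn hn
  have bound_nonneg : 0 ≤ sSup (scaledLagrangians r F) + ε :=
    add_nonneg sSup_scaledLagrangians_nonneg hε.le
  have choose_pos : (0 : ℝ) < n.choose r := mod_cast Nat.choose_pos hrn
  rw [div_le_iff₀ choose_pos]
  refine exNum_le (by positivity) fun G hG hFG ↦ ?_
  have card_div_le := card_div_choose_le hG (hrn.trans_eq (Fintype.card_fin n).symm)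
  rw [Fintype.card_fin] at card_div_le
  rw [← div_le_iff₀ choose_pos]
  linarith [edgeDensity_le G hG hFG]

end UpperBound

/-- **Lemma (Sidorenko).**  For any `r`-graph `F`, the sequence `ex(n,F)/C(n,r)` converges,
and its limit (the Turán density `π(F)`) equals
`sup { r!·λ(G) : G an F-hom-free r-graph }`. -/
theorem turan_density_eq_sup_lagrangian {α : Type*} [Fintype α]
    (r : ℕ) (F : Finset (Finset α)) (hF : IsRGraph r F) :
    Filter.Tendsto (fun n => (exNum r n F : ℝ) / (n.choose r)) Filter.atTop
      (nhds (sSup {x : ℝ | ∃ (k : ℕ) (G : Finset (Finset (Fin k))),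
        IsRGraph r G ∧ ¬ ContainsHom F G ∧ x = (r.factorial : ℝ) * lagrangian G})) := by
  refine tendsto_order.2 ⟨fun b hb ↦ ?_, fun b hb ↦ ?_⟩
  · filter_upwards [Filter.eventually_ge_atTop r] with n hrn
    exact hb.trans_le (sSup_scaledLagrangians_le_exNum_div_choose hrn)
  · obtain ⟨c, hc, hcb⟩ := exists_between hb
    filter_upwards [eventually_exNum_div_choose_le hF (sub_pos.2 hc)] with n hn
    exact (hn.trans_eq (add_sub_cancel _ _)).trans_lt hcb
end

section
/- Let ℓ > r ≥ 2 be integers and let F be a 2-graph with χ(F) = ℓ. If G is an r-graph on at least ℓ vertices that covers pairs (every pair of vertices of G lies in a common edge), then there exists a homomorphism from H_F^(r) to G. -/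
open Finset

/-!
An `ℓ`-colouring of `F` with `ℓ ≤ |V(G)|` yields a proper colouring of `F` by vertices of `G`. Since
`G` covers pairs, the two colours on an edge of `F` lie in a common edge of `G`; the remaining
`r - 2` vertices of that edge are the images of the `r - 2` new vertices. As the new vertices of
distinct edges of `F` are disjoint, these choices never conflict.
-/

section FinsetImage

variable {β : Type*} [DecidableEq β] {k : ℕ}

theorem exists_image_univ_eq {s : Finset β} (hs : #s = k) :
    ∃ p : Fin k → β, univ.image p = s := by
  let q := (s.equivFinOfCardEq hs).symm
  refine ⟨Subtype.val ∘ q, ?_⟩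
  rw [← image_image, image_univ_equiv, univ_eq_attach, attach_image_val]

theorem exists_union_image_univ_eq {s t : Finset β} (hst : s ⊆ t) (hk : #t - #s = k) :
    ∃ p : Fin k → β, s ∪ univ.image p = t := by
  obtain ⟨p, hp⟩ := exists_image_univ_eq ((card_sdiff_of_subset hst).trans hk)
  exact ⟨p, by rw [hp, union_sdiff_of_subset hst]⟩

end FinsetImage

/-- The 2-shadow of a hypergraph `G`: the graph joining two distinct vertices whenever they lie in
a common edge of `G`. Thus `G` covers pairs if and only if its 2-shadow is complete. -/
def shadowGraph {β : Type*} (G : Finset (Finset β)) : SimpleGraph β where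
  Adj u v := u ≠ v ∧ ∃ e ∈ G, u ∈ e ∧ v ∈ e
  symm := ⟨fun _ _ ⟨hne, e, he, hu, hv⟩ => ⟨hne.symm, e, he, hv, hu⟩⟩
  loopless := ⟨fun _ h => h.1 rfl⟩

theorem IsRGraph.exists_pair_union_image_mem {β : Type*} [DecidableEq β] {r : ℕ}
    {G : Finset (Finset β)} (hG : IsRGraph r G) {x y : β} (hxy : (shadowGraph G).Adj x y) :
    ∃ p : Fin (r - 2) → β, {x, y} ∪ univ.image p ∈ G := by
  obtain ⟨hne, e, he, hx, hy⟩ := hxy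
  have hsub : {x, y} ⊆ e := insert_subset hx (singleton_subset_iff.2 hy)
  have hcard : #e - #{x, y} = r - 2 := by rw [hG e he, card_pair hne]
  obtain ⟨p, hp⟩ := exists_union_image_univ_eq hsub hcard
  exact ⟨p, hp ▸ he⟩

theorem sym2ToFinset_mk_s13 {α : Type*} [Fintype α] [DecidableEq α] (u v : α) :
    sym2ToFinset s(u, v) = {u, v} := by
  ext x
  simp [sym2ToFinset]

section Expansion

variable {α β : Type*} [Fintype α] [DecidableEq α] [DecidableEq β] {r : ℕ}
  {F : SimpleGraph α} [DecidableRel F.Adj] {G : Finset (Finset β)}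

theorem containsHom_expansion_of_forall_adj (f : α → β)
    (hf : ∀ u v, F.Adj u v → ∃ p : Fin (r - 2) → β, {f u, f v} ∪ univ.image p ∈ G) :
    ContainsHom (expansion r F) G := by
  have hedge (e : F.edgeFinset) :
      ∃ p : Fin (r - 2) → β, (sym2ToFinset e.1).image f ∪ univ.image p ∈ G := by
    obtain ⟨⟨u, v⟩, he⟩ := e
    have huv : F.Adj u v := SimpleGraph.mem_edgeFinset.1 he
    simpa only [sym2ToFinset_mk_s13, image_insert, image_singleton] using hf u v huv
  choose p hp using hedge
  refine ⟨Sum.elim f fun x => p x.1 x.2, fun e he => ?_⟩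
  obtain ⟨d, -, rfl⟩ := mem_image.1 he
  rw [image_union, image_image, image_image]
  exact hp d

theorem containsHom_expansion_of_hom_shadowGraph (hG : IsRGraph r G) (φ : F →g shadowGraph G) :
    ContainsHom (expansion r F) G :=
  containsHom_expansion_of_forall_adj φ fun _ _ huv =>
    hG.exists_pair_union_image_mem (φ.map_adj huv)

theorem covers_pairs_contains_expansion_hom_general (hG : IsRGraph r G)
    (hcover : ∀ u v : β, u ≠ v → ∃ e ∈ G, u ∈ e ∧ v ∈ e) (c : F.Coloring β) :
    ContainsHom (expansion r F) G :=
  containsHom_expansion_of_hom_shadowGraph hG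
    ⟨c, fun huv => ⟨c.valid huv, hcover _ _ (c.valid huv)⟩⟩

end Expansion

/-- **Lemma.**  Let `ℓ > r ≥ 2` and let `F` be a 2-graph with `χ(F) = ℓ`.  If `G` is an
`r`-graph on at least `ℓ` vertices that covers pairs, then there is a homomorphism from
`H_F^(r)` to `G`. -/
theorem covers_pairs_contains_expansion_hom {α β : Type*}
    [Fintype α] [DecidableEq α] [Fintype β] [DecidableEq β]
    (r ℓ : ℕ) (hr : 2 ≤ r) (hrl : r < ℓ)
    (F : SimpleGraph α) [DecidableRel F.Adj] (hχ : F.chromaticNumber = (ℓ : ℕ∞))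
    (G : Finset (Finset β)) (hG : IsRGraph r G) (hcard : ℓ ≤ Fintype.card β)
    (hcover : ∀ u v : β, u ≠ v → ∃ e ∈ G, u ∈ e ∧ v ∈ e) :
    ContainsHom (expansion r F) G := by
  have hcol : F.Colorable ℓ := SimpleGraph.chromaticNumber_le_iff_colorable.1 hχ.le
  exact covers_pairs_contains_expansion_hom_general hG hcover (hcol.toColoring hcard)
end
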